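/- arXiv:1706.02951 — 2 statements merged into one kernel-verified Lean document; each statement's English description precedes it below -/
import Mathlib

section
/- Let X be a complex Banach space with dim X > 2 and let 𝒩 be a non-trivial nest on X with X_- ⊊ X. Then for every n ≥ 2 and every Lie n-derivation L : Alg 𝒩 → B(X) there exist a derivation D : Alg 𝒩 → B(X) and a linear map H : Alg 𝒩 → ℂI vanishing on every (n−1)-th commutator p_n(A_1,…,A_n) with A_1,…,A_n ∈ Alg 𝒩 such that L = D + H; moreover, if L is continuous then D and H can be chosen continuous. -/
open scoped Classical

set_option synthInstance.maxHeartbeats 1000000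
set_option maxHeartbeats 1000000

noncomputable section

/-- The `(n-1)`-th commutator polynomial `p_n(x_1, …, x_n)`, defined recursively by
`p_1(x_1) = x_1` and `p_k(x_1, …, x_k) = [p_{k-1}(x_1, …, x_{k-1}), x_k]`. -/
def commPoly {A : Type*} [NonUnitalNonAssocRing A] : (n : ℕ) → (Fin n → A) → A
  | 0, _ => 0
  | 1, a => a 0
  | n + 2, a =>
      commPoly (n + 1) (fun i => a i.castSucc) * a (Fin.last (n + 1)) -
        a (Fin.last (n + 1)) * commPoly (n + 1) (fun i => a i.castSucc)

/-- A nest of closed subspaces of `X`: it contains `{0}` and `X`, is totally ordered by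
inclusion, is closed under arbitrary intersections, and contains the norm-closed linear
span of the union of any subfamily. -/
structure IsNest {X : Type*} [NormedAddCommGroup X] [NormedSpace ℂ X]
    (𝒩 : Set (Submodule ℂ X)) : Prop where
  closed : ∀ N ∈ 𝒩, IsClosed (N : Set X)
  bot_mem : (⊥ : Submodule ℂ X) ∈ 𝒩
  top_mem : (⊤ : Submodule ℂ X) ∈ 𝒩
  total : ∀ N₁ ∈ 𝒩, ∀ N₂ ∈ 𝒩, N₁ ≤ N₂ ∨ N₂ ≤ N₁
  sInf_mem : ∀ S ⊆ 𝒩, sInf S ∈ 𝒩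
  closure_sSup_mem : ∀ S ⊆ 𝒩, (sSup S).topologicalClosure ∈ 𝒩

/-- The nest algebra `Alg 𝒩` of all bounded operators leaving every member of `𝒩`
invariant. -/
def nestAlgebra {X : Type*} [NormedAddCommGroup X] [NormedSpace ℂ X]
    (𝒩 : Set (Submodule ℂ X)) : Subalgebra ℂ (X →L[ℂ] X) where
  carrier := {T : X →L[ℂ] X | ∀ N ∈ 𝒩, ∀ x ∈ N, T x ∈ N}
  mul_mem' := fun {a b} ha hb N hN x hx => ha N hN _ (hb N hN x hx)
  one_mem' := fun N _ x hx => hx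
  add_mem' := fun {a b} ha hb N hN x hx => N.add_mem (ha N hN x hx) (hb N hN x hx)
  zero_mem' := fun N _ _ _ => N.zero_mem
  algebraMap_mem' := fun r N hN x hx => by
    simpa [Algebra.algebraMap_eq_smul_one] using N.smul_mem r hx

/-- `X₋` : the norm-closed linear span of the union of all members of `𝒩` different
from `X`. -/
def nestXminus {X : Type*} [NormedAddCommGroup X] [NormedSpace ℂ X]
    (𝒩 : Set (Submodule ℂ X)) : Submodule ℂ X :=
  (sSup {N | N ∈ 𝒩 ∧ N ≠ (⊤ : Submodule ℂ X)}).topologicalClosure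

/-- `L` is a Lie `n`-derivation on the subalgebra `𝒜` of `B`:
`L(p_n(a_1,…,a_n)) = ∑_k p_n(a_1, …, a_{k-1}, L(a_k), a_{k+1}, …, a_n)`. -/
def IsLieNDeriv {B : Type*} [Ring B] [Algebra ℂ B] (𝒜 : Subalgebra ℂ B)
    (n : ℕ) (L : ↥𝒜 →ₗ[ℂ] B) : Prop :=
  ∀ a : Fin n → ↥𝒜,
    L (commPoly n a) =
      ∑ k : Fin n, commPoly n (Function.update (fun i => ((a i : B))) k (L (a k)))

/-- `D` is an (associative) derivation on the subalgebra `𝒜` of `B`. -/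
def IsDerivOn {B : Type*} [Ring B] [Algebra ℂ B] (𝒜 : Subalgebra ℂ B)
    (D : ↥𝒜 →ₗ[ℂ] B) : Prop :=
  ∀ a b : ↥𝒜, D (a * b) = D a * (b : B) + (a : B) * D b

/-!
Write `Φ = φ + ε K` for the lift to the dual numbers of an additive map `K` into a bimodule. Then
`K` is a Lie `n`-derivation exactly when `Φ` preserves bracket words with `n - 1` brackets, hence
also those with `2 (n - 1)` brackets. A functional `f` vanishing on `X₋` puts every rank-one
operator `x ⊗ f` into the nest algebra; fix `u` with `f u = 1` and let `p = u ⊗ f`. Subtracting from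
`L` the inner derivation given by `T x = L (x ⊗ f) u`, suitably normalized, leaves a Lie
`n`-derivation `K` with `K (x ⊗ f) u` a multiple of `u` that vanishes for `x ∈ ker f`.

The word `[x ⊗ f, p, …, p]` shows that `K p` is scalar. As `[·, p, …, p]` with an odd number of
entries `p` is just `[·, p]`, the map `K` obeys the Leibniz rule on the brackets `[[a, p], b]` and
`[[a, b], p]`, whatever `n` is. Comparing eigenspaces of `[·, p]` gives first `K (x ⊗ f) = 0` for
`x ∈ ker f`, and then that every `K a` is the scalar `f (K a u)`. So `L` is `[T, ·]` plus a
scalar-valued map, and the latter kills commutators because `K` takes central values.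
-/

section LieWord

attribute [local instance] LieRing.ofAssociativeRing

variable {R S : Type*} [Ring R] [Ring S]

/-- The left-normed bracket word `⁅…⁅⁅x, l₁⁆, l₂⁆, …, lₖ⁆`, that is, `p_{k+1}(x, l₁, …, lₖ)`. Lists
make the words `⁅x, p, …, p, y⁆` of the argument easy to write and to split. -/
def lieWord (x : R) (l : List R) : R :=
  l.foldl (fun y b => ⁅y, b⁆) x

lemma lieWord_nil (x : R) : lieWord x [] = x := rfl

lemma lieWord_cons (x b : R) (l : List R) : lieWord x (b :: l) = lieWord ⁅x, b⁆ l := rfl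

lemma lieWord_append (x : R) (l l' : List R) :
    lieWord x (l ++ l') = lieWord (lieWord x l) l' :=
  List.foldl_append

lemma lieWord_replicate (x b : R) (k : ℕ) :
    lieWord x (List.replicate k b) = (fun y => ⁅y, b⁆)^[k] x := by
  induction k generalizing x with
  | zero => rfl
  | succ k ih => rw [List.replicate_succ, lieWord_cons, ih, Function.iterate_succ_apply]

lemma map_ringHom_lie (χ : R →+* S) (x y : R) : χ ⁅x, y⁆ = ⁅χ x, χ y⁆ := by
  simp only [Ring.lie_def, map_sub, map_mul]

lemma map_lieWord (χ : R →+* S) (x : R) (l : List R) :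
    χ (lieWord x l) = lieWord (χ x) (l.map χ) := by
  induction l generalizing x with
  | nil => rfl
  | cons b l ih => rw [lieWord_cons, ih, List.map_cons, lieWord_cons, map_ringHom_lie]

lemma commPoly_succ_eq_lieWord (m : ℕ) (a : Fin (m + 1) → R) :
    commPoly (m + 1) a = lieWord (a 0) (List.ofFn fun i : Fin m => a i.succ) := by
  induction m with
  | zero => rfl
  | succ m ih =>
    rw [commPoly, ih, List.ofFn_succ', List.concat_eq_append, lieWord_append]
    rfl

lemma map_commPoly (χ : R →+* S) (n : ℕ) (a : Fin n → R) :
    χ (commPoly n a) = commPoly n (χ ∘ a) := by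
  obtain _ | m := n
  · exact map_zero χ
  · rw [commPoly_succ_eq_lieWord, commPoly_succ_eq_lieWord, map_lieWord, List.map_ofFn]
    rfl

end LieWord

section DualLift

attribute [local instance] LieRing.ofAssociativeRing

variable {R S : Type*} [Ring R] [Ring S]

lemma fst_lie (y z : DualNumber S) : ⁅y, z⁆.fst = ⁅y.fst, z.fst⁆ :=
  map_ringHom_lie (TrivSqZeroExt.fstHom ℤ S S : DualNumber S →+* S) y z

lemma snd_lie (y z : DualNumber S) :
    ⁅y, z⁆.snd = ⁅y.snd, z.fst⁆ + ⁅y.fst, z.snd⁆ := by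
  simp only [Ring.lie_def, TrivSqZeroExt.snd_sub, DualNumber.snd_mul]
  abel

lemma snd_lieWord_eq_zero {y : DualNumber S} (hy : y.snd = 0) {l : List (DualNumber S)}
    (hl : ∀ b ∈ l, ∀ z : S, ⁅z, b.snd⁆ = 0) : (lieWord y l).snd = 0 := by
  induction l generalizing y with
  | nil => exact hy
  | cons b l ih =>
    rw [List.forall_mem_cons] at hl
    refine ih ?_ hl.2
    rw [snd_lie, hy, hl.1, zero_lie, add_zero]

lemma fst_commPoly (n : ℕ) (b : Fin n → DualNumber S) :
    (commPoly n b).fst = commPoly n fun i => (b i).fst :=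
  map_commPoly (TrivSqZeroExt.fstHom ℤ S S : DualNumber S →+* S) n b

lemma snd_commPoly (n : ℕ) (b : Fin n → DualNumber S) :
    (commPoly n b).snd =
      ∑ k, commPoly n (Function.update (fun i => (b i).fst) k (b k).snd) := by
  induction n using Nat.twoStepInduction with
  | zero => simp [commPoly]
  | one => simp [commPoly]
  | more m _ ih =>
    have hinit (k : Fin (m + 1)) (v : S) :
        (fun i : Fin (m + 1) =>
          Function.update (fun i => (b i).fst) k.castSucc v i.castSucc) =
          Function.update (fun i : Fin (m + 1) => (b i.castSucc).fst) k v :=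
      Function.update_comp_eq_of_injective _ (Fin.castSucc_injective _) _ _
    rw [Fin.sum_univ_castSucc, commPoly, ← Ring.lie_def, snd_lie, ih, fst_commPoly, sum_lie]
    simp only [commPoly, hinit, ← Ring.lie_def]
    simp [Function.update_of_ne, Fin.castSucc_ne_last, (Fin.castSucc_ne_last _).symm]

/-- The map `a ↦ φ a + ε K a` into the dual numbers. -/
def dualLift (φ : R →+* S) (K : R → S) (a : R) : DualNumber S :=
  TrivSqZeroExt.inl (φ a) + TrivSqZeroExt.inr (K a)

@[simp]
lemma fst_dualLift (φ : R →+* S) (K : R → S) (a : R) : (dualLift φ K a).fst = φ a := by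
  simp [dualLift]

@[simp]
lemma snd_dualLift (φ : R →+* S) (K : R → S) (a : R) : (dualLift φ K a).snd = K a := by
  simp [dualLift]

/-- `K` is a Lie `(k + 1)`-derivation from `R` into `S`, seen as an `R`-bimodule through `φ`. The
Leibniz rule for bracket words with `k` brackets is encoded by saying that the lift `φ + ε K` to
the dual numbers preserves these words. -/
def IsLieWordDeriv (φ : R →+* S) (k : ℕ) (K : R → S) : Prop :=
  ∀ x l, l.length = k →
    dualLift φ K (lieWord x l) = lieWord (dualLift φ K x) (l.map (dualLift φ K))

lemma IsLieWordDeriv.add {φ : R →+* S} {j k : ℕ} {K : R → S} (hj : IsLieWordDeriv φ j K)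
    (hk : IsLieWordDeriv φ k K) : IsLieWordDeriv φ (j + k) K := by
  intro x l hl
  rw [← List.take_append_drop j l, lieWord_append, List.map_append, lieWord_append,
    hk _ _ (by simp [hl]), hj _ _ (by simp [hl])]

-- With `e = 1 + ε t`, the lift of `K - ⁅t, φ ·⁆` is the conjugate `e⁻¹ (φ + ε K) e`.
lemma IsLieWordDeriv.sub_inner {φ : R →+* S} {k : ℕ} {K : R → S} (h : IsLieWordDeriv φ k K)
    (t : S) : IsLieWordDeriv φ k fun a => K a - ⁅t, φ a⁆ := by
  let e : (DualNumber S)ˣ :=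
    { val := 1 - TrivSqZeroExt.inr t
      inv := 1 + TrivSqZeroExt.inr t
      val_inv := by ext <;> simp
      inv_val := by ext <;> simp }
  let conj := MulSemiringAction.toRingHom (ConjAct (DualNumber S)ˣ) (DualNumber S)
    (ConjAct.toConjAct e)
  have hconj : dualLift φ (fun a => K a - ⁅t, φ a⁆) = conj ∘ dualLift φ K := by
    funext a
    change _ = (1 - TrivSqZeroExt.inr t) * dualLift φ K a * (1 + TrivSqZeroExt.inr t)
    ext
    · simp
    · simp only [Ring.lie_def, fst_dualLift, snd_dualLift, DualNumber.snd_mul,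
        TrivSqZeroExt.fst_mul, TrivSqZeroExt.fst_add, TrivSqZeroExt.snd_add,
        TrivSqZeroExt.fst_sub, TrivSqZeroExt.snd_sub, TrivSqZeroExt.fst_one,
        TrivSqZeroExt.snd_one, TrivSqZeroExt.fst_inr, TrivSqZeroExt.snd_inr]
      noncomm_ring
  intro x l hl
  rw [hconj, Function.comp_apply, Function.comp_apply, h x l hl, map_lieWord, List.map_map]

lemma IsLieWordDeriv.map_lieWord_eq_zero {φ : R →+* S} {k : ℕ} {K : R → S}
    (h : IsLieWordDeriv φ (k + 1) K) (hK : ∀ a (z : S), ⁅z, K a⁆ = 0) (x : R) {l : List R}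
    (hl : l.length = k + 1) : K (lieWord x l) = 0 := by
  obtain _ | ⟨b, l⟩ := l
  · simp at hl
  rw [← snd_dualLift φ K, h x _ hl, List.map_cons, lieWord_cons]
  refine snd_lieWord_eq_zero ?_ (by simp [hK])
  rw [snd_lie, snd_dualLift, snd_dualLift, hK, ← lie_skew, hK, neg_zero, add_zero]

lemma IsLieNDeriv.dualLift_commPoly {B : Type*} [Ring B] [Algebra ℂ B] {𝒜 : Subalgebra ℂ B}
    {n : ℕ} {L : 𝒜 →ₗ[ℂ] B} (hL : IsLieNDeriv 𝒜 n L) (χ : B →+* S) (a : Fin n → 𝒜) :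
    dualLift (χ.comp (𝒜.val : 𝒜 →+* B)) (χ ∘ L) (commPoly n a) =
      commPoly n (dualLift (χ.comp (𝒜.val : 𝒜 →+* B)) (χ ∘ L) ∘ a) := by
  ext
  · rw [fst_dualLift, map_commPoly, fst_commPoly]
    simp [Function.comp_def]
  · rw [snd_dualLift, snd_commPoly, Function.comp_apply, hL, map_sum]
    refine Finset.sum_congr rfl fun k _ => ?_
    rw [map_commPoly, Function.comp_update]
    simp [Function.comp_def]

lemma IsLieNDeriv.isLieWordDeriv {B : Type*} [Ring B] [Algebra ℂ B] {𝒜 : Subalgebra ℂ B} {m : ℕ}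
    {L : 𝒜 →ₗ[ℂ] B} (hL : IsLieNDeriv 𝒜 (m + 1) L) (χ : B →+* S) :
    IsLieWordDeriv (χ.comp (𝒜.val : 𝒜 →+* B)) m (χ ∘ L) := by
  rintro x l rfl
  have := hL.dualLift_commPoly χ (Fin.cons x l.get)
  simpa [commPoly_succ_eq_lieWord, List.ofFn_comp', ← List.map_ofFn] using this

end DualLift

section Idempotent

attribute [local instance] LieRing.ofAssociativeRing

variable {R S : Type*} [Ring R] [Ring S] {φ : R →+* S} {k : ℕ} {p : R}

lemma iterate_lie_of_isIdempotentElem {e : R} (he : IsIdempotentElem e) (y : R) (k : ℕ) :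
    (fun z => ⁅z, e⁆)^[2 * k + 1] y = ⁅y, e⁆ := by
  have hcube (z : R) : ⁅⁅⁅z, e⁆, e⁆, e⁆ = ⁅z, e⁆ := by
    have he' (w : R) : e * (e * w) = e * w := by rw [← mul_assoc, he.eq]
    simp only [Ring.lie_def, sub_mul, mul_sub, mul_assoc, he.eq, he']
    abel
  induction k with
  | zero => rfl
  | succ k ih =>
    rw [show 2 * (k + 1) + 1 = 2 * k + 1 + 1 + 1 by ring, Function.iterate_succ_apply',
      Function.iterate_succ_apply', ih, hcube]

/-- `K p` is central and `K` satisfies the Leibniz rule for the triple brackets whose second or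
third entry is `p`. For idempotent `p`, every Lie `n`-derivation with `K p` central has this
property, which no longer involves `n`. -/
structure IsTripleDerivAt (φ : R →+* S) (p : R) (K : R → S) : Prop where
  lie_map_self (z : S) : ⁅z, K p⁆ = 0
  map_lie_self_lie (a b : R) :
    K ⁅⁅a, p⁆, b⁆ = ⁅⁅K a, φ p⁆, φ b⁆ + ⁅⁅φ a, φ p⁆, K b⁆
  map_lie_lie_self (a b : R) :
    K ⁅⁅a, b⁆, p⁆ = ⁅⁅K a, φ b⁆ + ⁅φ a, K b⁆, φ p⁆

lemma IsLieWordDeriv.isTripleDerivAt {K : R → S} (h : IsLieWordDeriv φ (k + 1) K)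
    (hp : IsIdempotentElem p) (hKp : ∀ z : S, ⁅z, K p⁆ = 0) : IsTripleDerivAt φ p K := by
  have heven : IsLieWordDeriv φ (2 * k + 2) K := by
    have := h.add h
    rwa [show k + 1 + (k + 1) = 2 * k + 2 by ring] at this
  have hlie (y : DualNumber S) : ⁅y, dualLift φ K p⁆ = ⁅y, TrivSqZeroExt.inl (φ p)⁆ := by
    ext <;> simp [fst_lie, snd_lie, hKp]
  have hrun (x : R) :
      lieWord x (List.replicate (2 * k + 1) p) = ⁅x, p⁆ := by
    rw [lieWord_replicate, iterate_lie_of_isIdempotentElem hp]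
  have hrun' (y : DualNumber S) :
      lieWord y (List.replicate (2 * k + 1) (dualLift φ K p)) = ⁅y, TrivSqZeroExt.inl (φ p)⁆ := by
    have hφp : IsIdempotentElem (TrivSqZeroExt.inl (φ p) : DualNumber S) :=
      (hp.map φ).map (TrivSqZeroExt.inlHom S S)
    rw [lieWord_replicate, funext hlie, iterate_lie_of_isIdempotentElem hφp]
  refine ⟨hKp, fun a b => ?_, fun a b => ?_⟩
  · have := heven a (List.replicate (2 * k + 1) p ++ [b]) (by simp)
    rw [List.map_append, List.map_replicate, lieWord_append, lieWord_append, hrun, hrun'] at this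
    simpa [-lie_lie, lieWord_cons, lieWord_nil, fst_lie, snd_lie]
      using congrArg TrivSqZeroExt.snd this
  · have := heven a (b :: List.replicate (2 * k + 1) p) (by simp)
    rw [List.map_cons, List.map_replicate, lieWord_cons, lieWord_cons, hrun, hrun'] at this
    simpa [-lie_lie, fst_lie, snd_lie] using congrArg TrivSqZeroExt.snd this

lemma IsTripleDerivAt.map_lie_self_lie_self {K : R → S} (h : IsTripleDerivAt φ p K) (a : R) :
    K ⁅⁅a, p⁆, p⁆ = ⁅⁅K a, φ p⁆, φ p⁆ := by
  rw [h.map_lie_self_lie, h.lie_map_self, add_zero]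

lemma IsTripleDerivAt.lie_map_eq_zero_of_reversed [IsAddTorsionFree S] {K : R →+ S}
    (h : IsTripleDerivAt φ p K) {a : R} (s : ℤˣ) (ha : ⁅a, p⁆ = s • a)
    (hKa : ⁅K a, φ p⁆ = -(s • K a)) : ⁅φ a, K a⁆ = 0 := by
  have hφa : ⁅φ a, φ p⁆ = s • φ a := by
    simpa [map_ringHom_lie, Units.smul_def] using congrArg φ ha
  have hKaa := h.map_lie_self_lie a a
  have hself : ⁅⁅a, p⁆, a⁆ = 0 := by rw [ha, Units.smul_def, smul_lie, lie_self, smul_zero]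
  rw [hself, map_zero, hKa, hφa] at hKaa
  obtain rfl | rfl := Int.units_eq_one_or s
  · simpa [← two_nsmul, -nsmul_eq_mul] using hKaa.symm
  · rw [← neg_eq_zero, lie_skew]
    simpa [← two_nsmul, -nsmul_eq_mul] using hKaa.symm

end Idempotent

section RankOne

attribute [local instance] LieRing.ofAssociativeRing

variable {𝕜 X R : Type*} [Field 𝕜] [AddCommGroup X] [Module 𝕜 X] [Ring R]
  {φ : R →+* Module.End 𝕜 X} {f : Module.Dual 𝕜 X} {u : X} {r : X → R}

lemma eq_zero_or_eq_zero_of_lie_smulRight_eq_zero {g : Module.Dual 𝕜 X} {x : X} (hx : f x = 0)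
    (hu : f u = 1) (hg : g u = 0) (h : ⁅f.smulRight x, g.smulRight u⁆ = 0) : x = 0 ∨ g = 0 := by
  have h_apply (z : X) : g z • x - (f z * g x) • u = 0 := by
    simpa [Ring.lie_def, hu, smul_smul] using LinearMap.congr_fun h z
  have hgx : g x = 0 := by simpa [hu, hx, hg] using congrArg f (h_apply u)
  refine or_iff_not_imp_left.2 fun hx0 => LinearMap.ext fun z => ?_
  simpa [hgx, hx0] using h_apply z

lemma eq_zero_of_recurrence [CharZero 𝕜] (hu : f u = 1) {v : X} {d : ℕ → X} (h0 : d 0 = 0)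
    (hd : ∀ j, d (j + 1) = d j - f (d j) • u + v) {k : ℕ} (hk : d (k + 1) = 0) : v = 0 := by
  have hfv : f v = 0 := by simpa [hd, hu] using congrArg f hk
  have hd_eq (j : ℕ) : d j = (j : 𝕜) • v := by
    induction j with
    | zero => simp [h0]
    | succ j ih => simp [hd, ih, hfv, add_smul]
  rw [hd_eq] at hk
  exact (smul_eq_zero.1 hk).resolve_left (Nat.cast_ne_zero.2 k.succ_ne_zero)

/-- `φ` represents `R` faithfully on `X`, and the image contains all rank-one operators `x ⊗ f`,
where the functional `f` takes the value `1` at `u`; the preimage of `x ⊗ f` is `r x`. -/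
structure IsRankOneFamily (φ : R →+* Module.End 𝕜 X) (f : Module.Dual 𝕜 X) (u : X) (r : X → R) :
    Prop where
  injective : Function.Injective φ
  map_eq_smulRight (x : X) : φ (r x) = f.smulRight x
  apply_eq_one : f u = 1

namespace IsRankOneFamily

lemma map_apply (hr : IsRankOneFamily φ f u r) (x z : X) : φ (r x) z = f z • x := by
  rw [hr.map_eq_smulRight, LinearMap.smulRight_apply]

lemma isIdempotentElem (hr : IsRankOneFamily φ f u r) : IsIdempotentElem (r u) := by
  apply hr.injective
  ext z
  simp [hr.map_apply, hr.apply_eq_one]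

lemma apply_zero (hr : IsRankOneFamily φ f u r) : r 0 = 0 :=
  hr.injective <| by rw [hr.map_eq_smulRight, LinearMap.smulRight_zero, map_zero]

lemma lie_eq_self (hr : IsRankOneFamily φ f u r) {x : X} (hx : f x = 0) : ⁅r x, r u⁆ = r x := by
  apply hr.injective
  ext z
  simp [Ring.lie_def, hr.map_apply, hx, hr.apply_eq_one]

-- Bracketing with the lift of `r u` fixes the lift of `r x` after `k + 1` steps, while each step
-- moves the value at `u` of its `ε`-part by `c x - K (r u) x`, up to a multiple of `u`.
lemma map_idempotent_apply_of_eq_zero [CharZero 𝕜] {K : R → Module.End 𝕜 X} {k : ℕ} {c : 𝕜}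
    (hr : IsRankOneFamily φ f u r) (hK : IsLieWordDeriv φ (k + 1) K)
    (hKu : ∀ x, K (r x) u = (f x * c) • u) {x : X} (hx : f x = 0) :
    K (r u) x = c • x := by
  set E : DualNumber (Module.End 𝕜 X) → DualNumber (Module.End 𝕜 X) :=
    fun y => ⁅y, dualLift φ K (r u)⁆ with hE
  set v := c • x - K (r u) x with hv
  have hfix : E^[k + 1] (dualLift φ K (r x)) = dualLift φ K (r x) := by
    have hword := hK (r x) (List.replicate (k + 1) (r u)) List.length_replicate
    rwa [List.map_replicate, lieWord_replicate, lieWord_replicate,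
      Function.iterate_fixed (f := fun y => ⁅y, r u⁆) (hr.lie_eq_self hx), eq_comm] at hword
  have hfst (j : ℕ) : (E^[j] (dualLift φ K (r x))).fst = φ (r x) := by
    induction j with
    | zero => simp
    | succ j ih =>
      rw [Function.iterate_succ_apply', hE, fst_lie, ← hE, ih, fst_dualLift]
      simpa [Ring.lie_def] using congrArg φ (hr.lie_eq_self hx)
  set d : ℕ → X := fun j => (E^[j] (dualLift φ K (r x))).snd u with hd
  have hd_zero : d 0 = 0 := by simp [hd, hKu, hx]
  have hd_succ (j : ℕ) : d (j + 1) = d j - f (d j) • u + v := by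
    simp only [hd, Function.iterate_succ_apply']
    rw [hE, snd_lie, ← hE, hfst]
    simp [Ring.lie_def, hr.map_apply, hr.apply_eq_one, hKu, hv]
  have hd_fix : d (k + 1) = 0 := (congrArg (fun y => y.snd u) hfix).trans hd_zero
  exact (sub_eq_zero.1 (eq_zero_of_recurrence hr.apply_eq_one hd_zero hd_succ hd_fix)).symm

lemma map_idempotent_apply [CharZero 𝕜] {K : R → Module.End 𝕜 X} {k : ℕ} {c : 𝕜}
    (hr : IsRankOneFamily φ f u r) (hK : IsLieWordDeriv φ (k + 1) K)
    (hKu : ∀ x, K (r x) u = (f x * c) • u) (z : X) : K (r u) z = c • z := by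
  have hker := hr.map_idempotent_apply_of_eq_zero hK hKu (x := z - f z • u)
    (by simp [hr.apply_eq_one])
  simpa [hKu, hr.apply_eq_one, smul_sub, smul_comm c] using hker

lemma isTripleDerivAt [CharZero 𝕜] {K : R → Module.End 𝕜 X} {k : ℕ} {c : 𝕜}
    (hr : IsRankOneFamily φ f u r) (hK : IsLieWordDeriv φ (k + 1) K)
    (hKu : ∀ x, K (r x) u = (f x * c) • u) : IsTripleDerivAt φ (r u) K :=
  hK.isTripleDerivAt hr.isIdempotentElem fun T => by
    ext z
    simp [Ring.lie_def, hr.map_idempotent_apply hK hKu]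

lemma lie_lie_idempotent_smulRight (hr : IsRankOneFamily φ f u r) (T : Module.End 𝕜 X) {x : X}
    (hx : f x = 0) :
    ⁅⁅T, φ (r x)⁆, φ (r u)⁆ = f.smulRight (T x - f (T u) • x - f (T x) • u) := by
  ext z
  simp only [Ring.lie_def, LinearMap.sub_apply, Module.End.mul_apply, hr.map_apply, map_sub,
    map_smul, smul_eq_mul, hx, hr.apply_eq_one, LinearMap.smulRight_apply]
  module

lemma lie_idempotent_lie_lie_lie (hr : IsRankOneFamily φ f u r) (T : Module.End 𝕜 X) {x : X}
    (hx : f x = 0) :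
    ⁅⁅⁅⁅T, φ (r u)⁆, φ (r x)⁆, φ (r x)⁆, φ (r u)⁆ = (2 * f (T x)) • f.smulRight x := by
  ext z
  simp only [Ring.lie_def, LinearMap.sub_apply, Module.End.mul_apply, hr.map_apply, map_sub,
    map_smul, smul_eq_mul, hx, hr.apply_eq_one, LinearMap.smul_apply, LinearMap.smulRight_apply]
  module

lemma apply_map_apply_eq_zero [CharZero 𝕜] {K : R → Module.End 𝕜 X}
    (hr : IsRankOneFamily φ f u r) (hK : IsTripleDerivAt φ (r u) K)
    (hKr : ∀ x, f x = 0 → K (r x) = 0) (a : R) {x : X} (hx : f x = 0) : f (K a x) = 0 := by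
  have hlie : ⁅⁅⁅⁅a, r u⁆, r x⁆, r x⁆, r u⁆ = r ((2 * f (φ a x)) • x) := by
    apply hr.injective
    simp only [map_ringHom_lie]
    rw [hr.lie_idempotent_lie_lie_lie _ hx, hr.map_eq_smulRight]
    ext z
    exact smul_comm _ _ _
  have hK_lie : K ⁅⁅⁅⁅a, r u⁆, r x⁆, r x⁆, r u⁆ = (2 * f (K a x)) • f.smulRight x := by
    rw [hK.map_lie_lie_self, hK.map_lie_self_lie, hKr x hx, lie_zero, lie_zero, add_zero, add_zero,
      hr.lie_idempotent_lie_lie_lie _ hx]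
  rw [hlie, hKr _ (by simp [hx])] at hK_lie
  have hKu := LinearMap.congr_fun hK_lie u
  obtain h | rfl : f (K a x) = 0 ∨ x = 0 := by simpa [hr.apply_eq_one] using hKu.symm
  · exact h
  · simp

lemma map_apply_eq_smul_of_eq_zero [CharZero 𝕜] {K : R → Module.End 𝕜 X}
    (hr : IsRankOneFamily φ f u r) (hK : IsTripleDerivAt φ (r u) K)
    (hKr : ∀ x, f x = 0 → K (r x) = 0) (a : R) {x : X} (hx : f x = 0) : K a x = f (K a u) • x := by
  have hlie : ⁅⁅a, r x⁆, r u⁆ = r (φ a x - f (φ a u) • x - f (φ a x) • u) := by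
    apply hr.injective
    rw [map_ringHom_lie, map_ringHom_lie, hr.lie_lie_idempotent_smulRight _ hx,
      hr.map_eq_smulRight]
  have hK_lie := hK.map_lie_lie_self a (r x)
  rw [hlie, hKr _ (by simp [hx, hr.apply_eq_one]), hKr x hx, lie_zero, add_zero,
    hr.lie_lie_idempotent_smulRight _ hx, hr.apply_map_apply_eq_zero hK hKr a hx] at hK_lie
  have hKu := LinearMap.congr_fun hK_lie u
  simpa [hr.apply_eq_one, sub_eq_zero] using hKu.symm

variable {K : R →+ Module.End 𝕜 X}

lemma map_eq_zero [CharZero 𝕜] (hr : IsRankOneFamily φ f u r) (hK : IsTripleDerivAt φ (r u) K)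
    (hKu : ∀ x, f x = 0 → K (r x) u = 0) {x : X} (hx : f x = 0) : K (r x) = 0 := by
  have : IsAddTorsionFree (Module.End 𝕜 X) := .of_isTorsionFree 𝕜 _
  have hKrx : K (r x) = (f ∘ₗ K (r x)).smulRight u := by
    have hlie := hK.map_lie_self_lie_self (r x)
    rw [hr.lie_eq_self hx, hr.lie_eq_self hx] at hlie
    ext z
    simpa [Ring.lie_def, hr.map_apply, hKu x hx, hr.apply_eq_one] using LinearMap.congr_fun hlie z
  have hcomm : ⁅φ (r x), K (r x)⁆ = 0 := by
    refine hK.lie_map_eq_zero_of_reversed 1 (by simpa using hr.lie_eq_self hx) ?_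
    rw [hKrx]
    ext z
    simp [Ring.lie_def, hr.map_apply, hKu x hx, hr.apply_eq_one]
  rw [hr.map_eq_smulRight, hKrx] at hcomm
  obtain rfl | hg := eq_zero_or_eq_zero_of_lie_smulRight_eq_zero hx hr.apply_eq_one
    (by simp [hKu x hx]) hcomm
  · rw [hr.apply_zero, map_zero]
  · rw [hKrx, hg, LinearMap.zero_smulRight]

lemma map_idempotent_mul_sub [CharZero 𝕜] (hr : IsRankOneFamily φ f u r)
    (hK : IsTripleDerivAt φ (r u) K) (hKr : ∀ x, f x = 0 → K (r x) = 0) (a : R) :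
    K (r u * a - r u * a * r u) = f.smulRight (K a u - f (K a u) • u) := by
  have hlie : ⁅⁅a, r u⁆, r u⁆ =
      r (φ a u - f (φ a u) • u) + (r u * a - r u * a * r u) := by
    apply hr.injective
    ext z
    simp only [Ring.lie_def, map_sub, map_mul, map_add, map_smul, LinearMap.sub_apply,
      LinearMap.add_apply, Module.End.mul_apply, hr.map_apply, hr.apply_eq_one, smul_eq_mul]
    module
  have hK_lie := hK.map_lie_self_lie_self a
  rw [hlie, map_add, hKr _ (by simp [hr.apply_eq_one]), zero_add] at hK_lie
  rw [hK_lie]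
  ext z
  have hKz := hr.map_apply_eq_smul_of_eq_zero hK hKr a (x := z - f z • u)
    (by simp [hr.apply_eq_one])
  rw [map_sub, sub_eq_iff_eq_add] at hKz
  simp [Ring.lie_def, hr.map_apply, hr.apply_eq_one, hKz]

lemma map_apply_self_eq_smul [CharZero 𝕜] (hr : IsRankOneFamily φ f u r)
    (hK : IsTripleDerivAt φ (r u) K) (hKr : ∀ x, f x = 0 → K (r x) = 0) (a : R) :
    K a u = f (K a u) • u := by
  have : IsAddTorsionFree (Module.End 𝕜 X) := .of_isTorsionFree 𝕜 _
  set y := K a u - f (K a u) • u with hy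
  have hfy : f y = 0 := by simp [hy, hr.apply_eq_one]
  set b := r u * a - r u * a * r u with hb
  have hKb : K b = f.smulRight y := hr.map_idempotent_mul_sub hK hKr a
  have hφb : φ b = (f ∘ₗ φ a - f (φ a u) • f).smulRight u := by
    ext z
    simp [hb, hr.map_apply, sub_smul, smul_smul, mul_comm]
  have hbp : ⁅b, r u⁆ = (-1 : ℤˣ) • b := by
    apply hr.injective
    simp only [map_ringHom_lie, Units.neg_smul, one_smul, map_neg, hφb]
    ext z
    simp [Ring.lie_def, hr.map_apply, hr.apply_eq_one]
  have hcomm : ⁅φ b, K b⁆ = 0 := by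
    refine hK.lie_map_eq_zero_of_reversed (-1) hbp ?_
    rw [hKb, ← hr.map_eq_smulRight, ← map_ringHom_lie, hr.lie_eq_self hfy]
    simp
  rw [hφb, hKb, ← neg_eq_zero, lie_skew] at hcomm
  obtain hy0 | hg := eq_zero_or_eq_zero_of_lie_smulRight_eq_zero hfy hr.apply_eq_one
    (by simp [hr.apply_eq_one]) hcomm
  · exact sub_eq_zero.1 hy0
  · rw [hg, LinearMap.zero_smulRight] at hφb
    rw [(map_eq_zero_iff φ hr.injective).1 hφb, map_zero] at hKb
    have hKu := LinearMap.congr_fun hKb u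
    simpa [hr.apply_eq_one, hy, sub_eq_zero] using hKu.symm

theorem map_apply_eq_smul [CharZero 𝕜] (hr : IsRankOneFamily φ f u r) {k : ℕ} {c : 𝕜}
    (hK : IsLieWordDeriv φ (k + 1) K) (hKu : ∀ x, K (r x) u = (f x * c) • u) (a : R) (z : X) :
    K a z = f (K a u) • z := by
  have hTriple := hr.isTripleDerivAt hK hKu
  have hKr (x : X) (hx : f x = 0) : K (r x) = 0 :=
    hr.map_eq_zero hTriple (fun x hx => by rw [hKu, hx, zero_mul, zero_smul]) hx
  have hKz := hr.map_apply_eq_smul_of_eq_zero hTriple hKr a (x := z - f z • u)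
    (by simp [hr.apply_eq_one])
  rw [map_sub, map_smul, hr.map_apply_self_eq_smul hTriple hKr a] at hKz
  simpa [smul_sub, smul_comm (f z), hr.apply_eq_one] using hKz

end IsRankOneFamily

section Implementer

variable [Algebra 𝕜 R]

/-- For a Lie `n`-derivation `L` and rank-one operators `r x = x ⊗ f` with `f u = 1`, the operator
`x ↦ L (r x) u` implements `L` modulo scalars. It is normalized by a multiple of `u ⊗ f` so that
`f` vanishes on its value at `u`. -/
def implementer (L : R →ₗ[𝕜] Module.End 𝕜 X) (f : Module.Dual 𝕜 X) (u : X) (r : X →ₗ[𝕜] R) :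
    Module.End 𝕜 X :=
  LinearMap.applyₗ u ∘ₗ L ∘ₗ r - f.smulRight (f (L (r u) u) • u)

lemma implementer_apply (L : R →ₗ[𝕜] Module.End 𝕜 X) (f : Module.Dual 𝕜 X) (u : X)
    (r : X →ₗ[𝕜] R) (x : X) :
    implementer L f u r x = L (r x) u - f x • f (L (r u) u) • u := rfl

/-- The scalar by which `L a` differs from the commutator of `implementer L f u r` with `a`, read
off at `u` with the help of `f`. -/
def scalarPart (φ : R →ₐ[𝕜] Module.End 𝕜 X) (L : R →ₗ[𝕜] Module.End 𝕜 X) (f : Module.Dual 𝕜 X)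
    (u : X) (r : X →ₗ[𝕜] R) : R →ₗ[𝕜] 𝕜 where
  toFun a := f ((L a - ⁅implementer L f u r, φ a⁆) u)
  map_add' a b := by
    simp only [map_add, map_sub, lie_add, LinearMap.add_apply, LinearMap.sub_apply]
    ring
  map_smul' c a := by simp [Ring.lie_def, mul_sub]

variable {ψ : R →ₐ[𝕜] Module.End 𝕜 X} {L : R →ₗ[𝕜] Module.End 𝕜 X} {s : X →ₗ[𝕜] R} {k : ℕ}

theorem IsRankOneFamily.sub_lie_implementer_eq_smul [CharZero 𝕜]
    (hs : IsRankOneFamily (ψ : R →+* Module.End 𝕜 X) f u s)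
    (hL : IsLieWordDeriv (ψ : R →+* Module.End 𝕜 X) (k + 1) L) (a : R) :
    L a - ⁅implementer L f u s, ψ a⁆ = scalarPart ψ L f u s a • 1 := by
  let K : R →+ Module.End 𝕜 X :=
    AddMonoidHom.mk' (fun a => L a - ⁅implementer L f u s, ψ a⁆) fun a b => by
      rw [map_add, map_add, lie_add, add_sub_add_comm]
  have hψ (x z : X) : ψ (s x) z = f z • x := hs.map_apply x z
  have hK (x : X) : K (s x) u = (f x * f (L (s u) u)) • u := by
    simp [K, Ring.lie_def, hψ, implementer_apply, hs.apply_eq_one, mul_smul]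
  ext z
  exact hs.map_apply_eq_smul (K := K) (hL.sub_inner _) hK a z

theorem IsRankOneFamily.scalarPart_lieWord_eq_zero [CharZero 𝕜]
    (hs : IsRankOneFamily (ψ : R →+* Module.End 𝕜 X) f u s)
    (hL : IsLieWordDeriv (ψ : R →+* Module.End 𝕜 X) (k + 1) L) (x : R) {l : List R}
    (hl : l.length = k + 1) : scalarPart ψ L f u s (lieWord x l) = 0 := by
  have hcentral (a : R) (T : Module.End 𝕜 X) : ⁅T, L a - ⁅implementer L f u s, ψ a⁆⁆ = 0 := by
    rw [hs.sub_lie_implementer_eq_smul hL]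
    simp [Ring.lie_def]
  have h_zero : L (lieWord x l) - ⁅implementer L f u s, ψ (lieWord x l)⁆ = 0 :=
    (hL.sub_inner (implementer L f u s)).map_lieWord_eq_zero hcentral x hl
  change f ((L (lieWord x l) - ⁅implementer L f u s, ψ (lieWord x l)⁆) u) = 0
  rw [h_zero, LinearMap.zero_apply, map_zero]

end Implementer

end RankOne

section SubalgebraAction

variable {𝕜 X : Type*} [NontriviallyNormedField 𝕜] [NormedAddCommGroup X] [NormedSpace 𝕜 X]
  {𝒜 : Subalgebra 𝕜 (X →L[𝕜] X)} {f : X →L[𝕜] 𝕜}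

/-- The tautological representation of an algebra of bounded operators on `X`, with values in the
algebra of all linear maps, where the implementing operator lives before it is known to be
bounded. -/
def operatorAction (𝒜 : Subalgebra 𝕜 (X →L[𝕜] X)) : 𝒜 →ₐ[𝕜] Module.End 𝕜 X :=
  (AlgHom.ofLinearMap (ContinuousLinearMap.coeLM 𝕜) rfl fun _ _ => rfl).comp 𝒜.val

/-- The rank-one operators `x ⊗ f` as elements of an algebra `𝒜` which contains all of them. -/
def rankOne (f : X →L[𝕜] 𝕜) (h𝒜 : ∀ x, f.smulRight x ∈ 𝒜) : X →L[𝕜] 𝒜 :=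
  (ContinuousLinearMap.smulRightL 𝕜 X X f).codRestrict 𝒜.toSubmodule h𝒜

lemma isRankOneFamily_rankOne {h𝒜 : ∀ x, f.smulRight x ∈ 𝒜} {u : X} (hu : f u = 1) :
    IsRankOneFamily (operatorAction 𝒜 : 𝒜 →+* Module.End 𝕜 X) f u (rankOne f h𝒜) where
  injective := ContinuousLinearMap.coe_injective.comp Subtype.val_injective
  map_eq_smulRight _ := rfl
  apply_eq_one := hu

end SubalgebraAction

section NestAlgebra

attribute [local instance] LieRing.ofAssociativeRing

lemma exists_ne_zero_forall_mem_eq_zero {𝕜 X : Type*} [RCLike 𝕜] [NormedAddCommGroup X]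
    [NormedSpace 𝕜 X] {M : Submodule 𝕜 X} (hM : IsClosed (M : Set X)) (hlt : M < ⊤) :
    ∃ f : X →L[𝕜] 𝕜, f ≠ 0 ∧ ∀ x ∈ M, f x = 0 := by
  obtain ⟨v, -, hv⟩ := SetLike.exists_of_lt hlt
  have : IsClosed (M : Set X) := hM
  obtain ⟨g, hg⟩ := SeparatingDual.exists_ne_zero (R := 𝕜) (x := M.mkQL v) (by simpa using hv)
  refine ⟨g.comp M.mkQL, fun h => hg (DFunLike.congr_fun h v), fun x hx => ?_⟩
  have hx0 : M.mkQL x = 0 := by simpa using hx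
  rw [ContinuousLinearMap.comp_apply, hx0, map_zero]

variable {X : Type*} [NormedAddCommGroup X] [NormedSpace ℂ X]

lemma smulRight_mem_nestAlgebra {𝒩 : Set (Submodule ℂ X)} {f : X →L[ℂ] ℂ}
    (hf : ∀ x ∈ nestXminus 𝒩, f x = 0) (x : X) : f.smulRight x ∈ nestAlgebra 𝒩 := by
  intro N hN y hy
  obtain rfl | hNt := eq_or_ne N ⊤
  · exact Submodule.mem_top
  · have hle : N ≤ nestXminus 𝒩 :=
      (le_sSup (show N ∈ {N | N ∈ 𝒩 ∧ N ≠ ⊤} from ⟨hN, hNt⟩)).trans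
        (Submodule.le_topologicalClosure _)
    simp [hf y (hle hy)]

lemma isDerivOn_of_eq_lie {𝒜 : Subalgebra ℂ (X →L[ℂ] X)} {D : 𝒜 →ₗ[ℂ] (X →L[ℂ] X)}
    {T : Module.End ℂ X} (hD : ∀ a, (D a : Module.End ℂ X) = ⁅T, operatorAction 𝒜 a⁆) :
    IsDerivOn 𝒜 D := by
  intro a b
  have hD_apply (a : 𝒜) (z : X) : D a z = T ((a : X →L[ℂ] X) z) - (a : X →L[ℂ] X) (T z) :=
    LinearMap.congr_fun (hD a) z
  ext z
  simp [hD_apply]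

theorem statement14_general {𝒜 : Subalgebra ℂ (X →L[ℂ] X)} {f : X →L[ℂ] ℂ} (hf : f ≠ 0)
    (h𝒜 : ∀ x, f.smulRight x ∈ 𝒜) {n : ℕ} (hn : 2 ≤ n) {L : 𝒜 →ₗ[ℂ] (X →L[ℂ] X)}
    (hL : IsLieNDeriv 𝒜 n L) :
    ∃ D H : 𝒜 →ₗ[ℂ] (X →L[ℂ] X),
      IsDerivOn 𝒜 D ∧
      (∀ a, ∃ c : ℂ, H a = c • (1 : X →L[ℂ] X)) ∧
      (∀ a : Fin n → 𝒜, H (commPoly n a) = 0) ∧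
      L = D + H ∧
      (Continuous L → Continuous D ∧ Continuous H) := by
  obtain ⟨m, rfl⟩ := Nat.exists_eq_add_of_le' hn
  obtain ⟨u, hu⟩ : ∃ u, f u = 1 := LinearMap.surjective (f := (f : Module.Dual ℂ X))
    (fun h => hf (ContinuousLinearMap.coe_injective h)) 1
  let L' : 𝒜 →ₗ[ℂ] Module.End ℂ X := ContinuousLinearMap.coeLM ℂ ∘ₗ L
  let r := rankOne f h𝒜
  have hr : IsRankOneFamily (operatorAction 𝒜 : 𝒜 →+* Module.End ℂ X) f u
      (r : X →ₗ[ℂ] 𝒜) := isRankOneFamily_rankOne hu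
  have hL' : IsLieWordDeriv (operatorAction 𝒜 : 𝒜 →+* Module.End ℂ X) (m + 1) L' :=
    hL.isLieWordDeriv ContinuousLinearMap.toLinearMapRingHom
  let T := implementer L' f u r
  let H : 𝒜 →ₗ[ℂ] (X →L[ℂ] X) := (scalarPart (operatorAction 𝒜) L' f u r).smulRight 1
  have hDH (a : 𝒜) : ((L - H) a : Module.End ℂ X) = ⁅T, operatorAction 𝒜 a⁆ :=
    sub_eq_iff_comm.1 (hr.sub_lie_implementer_eq_smul hL' a)
  refine ⟨L - H, H, isDerivOn_of_eq_lie hDH, fun a => ⟨_, rfl⟩, fun a => ?_,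
    (sub_add_cancel L H).symm, fun hcont => ?_⟩
  · rw [LinearMap.smulRight_apply, commPoly_succ_eq_lieWord,
      hr.scalarPart_lieWord_eq_zero hL' _ List.length_ofFn, zero_smul]
  · have hT : Continuous T := by
      change Continuous fun x => L (r x) u - f x • f (L (r u) u) • u
      fun_prop
    have hH : Continuous H := by
      change Continuous fun a : 𝒜 =>
        f (L a u - (T ((a : X →L[ℂ] X) u) - (a : X →L[ℂ] X) (T u))) • (1 : X →L[ℂ] X)
      fun_prop
    exact ⟨hcont.sub hH, hH⟩

end NestAlgebra

/-- (Corollary 3.12 of the paper.)  Let `X` be a complex Banach space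
with `dim X > 2` and `𝒩` a non-trivial nest on `X` with `X₋ ⊊ X`.  Then every Lie
`n`-derivation `L : Alg 𝒩 → B(X)` (`n ≥ 2`) decomposes as `L = D + H` with `D` a
derivation and `H` a linear map into `ℂ I` vanishing on all `(n-1)`-th commutators;
moreover, if `L` is continuous then `D, H` can be chosen continuous. -/
theorem statement14 {X : Type*} [NormedAddCommGroup X] [NormedSpace ℂ X] [CompleteSpace X]
    (hdim : 2 < Module.rank ℂ X)
    (𝒩 : Set (Submodule ℂ X)) (hnest : IsNest 𝒩)
    (hnontrivial : 𝒩 ≠ ({⊥, ⊤} : Set (Submodule ℂ X)))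
    (hXm : nestXminus 𝒩 < ⊤)
    (n : ℕ) (hn : 2 ≤ n)
    (L : ↥(nestAlgebra 𝒩) →ₗ[ℂ] (X →L[ℂ] X))
    (hL : IsLieNDeriv (nestAlgebra 𝒩) n L) :
    (∃ D H : ↥(nestAlgebra 𝒩) →ₗ[ℂ] (X →L[ℂ] X),
        IsDerivOn (nestAlgebra 𝒩) D ∧
        (∀ a : ↥(nestAlgebra 𝒩), ∃ c : ℂ, H a = c • (1 : X →L[ℂ] X)) ∧
        (∀ a : Fin n → ↥(nestAlgebra 𝒩), H (commPoly n a) = 0) ∧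
        L = D + H) ∧
    (Continuous L →
      ∃ D H : ↥(nestAlgebra 𝒩) →ₗ[ℂ] (X →L[ℂ] X),
        IsDerivOn (nestAlgebra 𝒩) D ∧
        (∀ a : ↥(nestAlgebra 𝒩), ∃ c : ℂ, H a = c • (1 : X →L[ℂ] X)) ∧
        (∀ a : Fin n → ↥(nestAlgebra 𝒩), H (commPoly n a) = 0) ∧
        L = D + H ∧ Continuous D ∧ Continuous H) := by
  obtain ⟨f, hf0, hf⟩ :=
    exists_ne_zero_forall_mem_eq_zero (Submodule.isClosed_topologicalClosure _) hXm
  obtain ⟨D, H, hD, hH, hH0, hLDH, hcont⟩ :=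
    statement14_general hf0 (smulRight_mem_nestAlgebra hf) hn hL
  exact ⟨⟨D, H, hD, hH, hH0, hLDH⟩, fun h => ⟨D, H, hD, hH, hH0, hLDH, hcont h⟩⟩
end
end

section
/- Let X be a complex Banach space and 𝒩 a non-trivial nest on X such that X_-^⊥ = {0} (equivalently dim X_-^⊥ = 0). Then for every n ≥ 2 and every Lie n-derivation L : Alg 𝒩 → B(X) there exist a derivation D : Alg 𝒩 → B(X) and a linear map H : Alg 𝒩 → ℂI vanishing on every (n−1)-th commutator p_n(A_1,…,A_n) with A_1,…,A_n ∈ Alg 𝒩 such that L = D + H; moreover, if L is continuous then D and H can be chosen continuous. -/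
open scoped Classical

set_option synthInstance.maxHeartbeats 1000000
set_option maxHeartbeats 1000000

noncomputable section

/-- The annihilator of a subspace `S` of `X` inside the continuous dual `X*`. -/
def annihilatorOf {X : Type*} [NormedAddCommGroup X] [NormedSpace ℂ X]
    (S : Submodule ℂ X) : Submodule ℂ (X →L[ℂ] ℂ) where
  carrier := {f | ∀ x ∈ S, f x = 0}
  add_mem' := fun {f g} hf hg x hx => by simp [hf x hx, hg x hx]
  zero_mem' := fun x _ => by simp
  smul_mem' := fun c f hf x hx => by simp [hf x hx]

/-!
Under the hypothesis `X₋^⊥ = {0}` the proper members of the nest have no greatest element and their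
union is dense. Hence every proper member `K` starts arbitrarily long chains of proper members, and
for `x ∈ K` and a functional `f` vanishing on the top of such a chain the rank-one operator `x ⊗ f`
is an iterated commutator. Writing it as `p_{n-1}(a)` and expanding `L (p_n(a, c))` shows that on
the brackets `[x ⊗ f, c]` the map `L` obeys the Leibniz rule of a Lie derivation, except that some
operator `E` takes the place of `L (x ⊗ f)`. Testing against rank-one operators `c` forces, up to an
additive scalar operator, `E = L (x ⊗ f) + t • (x ⊗ f)` with one scalar `t` for all of these
`x ⊗ f`, so that `M = L + t • id` obeys the true rule.

For `w ∈ ker f` outside the top `N` of the chain, `x ⊗ f` can be written as `p_n(a)` with all `a i`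
killing `w` and mapping into `N`, so that `M (x ⊗ f) w ∈ N`. Together with the Leibniz rule this
shows that the defect `M (A e) - A M(e) - M(A) e` on such rank-one operators `e` equals `σ(A) • e`,
where `σ(A)` does not depend on `e`. Since these `e` separate operators, `D = L + t • id + σ • I` is a
derivation. Comparing `D` with `L` on a commutator `c = p_n(a)` gives `(n - 1) t • c = σ(c) • I`.
For a nonzero `c` with `c² = 0` this forces `t = 0`, and then `σ` vanishes on all commutators.
-/

section CommPoly

open Function

variable {B : Type*} [Ring B]

attribute [local instance] LieRing.ofAssociativeRing

theorem commPoly_succ (m : ℕ) (b : Fin (m + 2) → B) :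
    commPoly (m + 2) b = ⁅commPoly (m + 1) (Fin.init b), b (Fin.last (m + 1))⁆ := rfl

/-- The sum `∑ k, p_n(b₁, …, b_{k-1}, F k, b_{k+1}, …, b_n)`, that is, the first-order variation of
`p_n` at `b` in the direction `F`. -/
def commPolyVariation (n : ℕ) (b F : Fin n → B) : B := ∑ k, commPoly n (update b k (F k))

theorem commPolyVariation_one (b F : Fin 1 → B) : commPolyVariation 1 b F = F 0 := by
  simp [commPolyVariation, commPoly]

theorem commPolyVariation_succ (m : ℕ) (b F : Fin (m + 2) → B) :
    commPolyVariation (m + 2) b F =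
      ⁅commPolyVariation (m + 1) (Fin.init b) (Fin.init F), b (Fin.last (m + 1))⁆ +
        ⁅commPoly (m + 1) (Fin.init b), F (Fin.last (m + 1))⁆ := by
  unfold commPolyVariation
  rw [Fin.sum_univ_castSucc, sum_lie]
  simp only [commPoly_succ, Fin.init_update_castSucc, Fin.init_update_last, update_self,
    update_of_ne (Fin.castSucc_lt_last _).ne', Fin.init]

theorem commPolyVariation_add (n : ℕ) (b F G : Fin n → B) :
    commPolyVariation n b (F + G) = commPolyVariation n b F + commPolyVariation n b G := by
  match n with
  | 0 => simp [commPolyVariation]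
  | 1 => simp only [commPolyVariation_one, Pi.add_apply]
  | m + 2 =>
    have ih := commPolyVariation_add (m + 1) (Fin.init b) (Fin.init F) (Fin.init G)
    have hinit : Fin.init (F + G) = Fin.init F + Fin.init G := rfl
    rw [commPolyVariation_succ, commPolyVariation_succ, commPolyVariation_succ, hinit, ih,
      Pi.add_apply, add_lie, lie_add]
    abel

section Algebra

variable {R : Type*} [CommRing R] [Algebra R B]

theorem commPolyVariation_smul_self (n : ℕ) (c : R) (b : Fin n → B) :
    commPolyVariation n b (c • b) = (n * c) • commPoly n b := by
  match n with
  | 0 => simp [commPolyVariation]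
  | 1 => simp [commPolyVariation_one, commPoly]
  | m + 2 =>
    have ih := commPolyVariation_smul_self (m + 1) c (Fin.init b)
    have hinit : Fin.init (c • b) = c • Fin.init b := rfl
    rw [commPolyVariation_succ, commPoly_succ, hinit, ih, Pi.smul_apply, smul_lie,
      lie_smul c (_ : B)]
    push_cast
    module

theorem exists_commPolyVariation_smul_one (m : ℕ) (b : Fin (m + 1) → B) (s : Fin (m + 1) → R) :
    ∃ c : R, commPolyVariation (m + 1) b (fun i => s i • 1) = c • 1 := by
  induction m with
  | zero => exact ⟨s 0, commPolyVariation_one _ _⟩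
  | succ m ih =>
    obtain ⟨c, hc⟩ := ih (Fin.init b) (Fin.init s)
    refine ⟨0, ?_⟩
    rw [commPolyVariation_succ, show Fin.init (fun i => s i • (1 : B)) = fun i => Fin.init s i • 1
      from rfl, hc]
    simp [Ring.lie_def]

theorem commPolyVariation_smul_one (m : ℕ) (b : Fin (m + 2) → B) (s : Fin (m + 2) → R) :
    commPolyVariation (m + 2) b (fun i => s i • 1) = 0 := by
  obtain ⟨c, hc⟩ := exists_commPolyVariation_smul_one m (Fin.init b) (Fin.init s)
  rw [commPolyVariation_succ, show Fin.init (fun i => s i • (1 : B)) = fun i => Fin.init s i • 1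
    from rfl, hc]
  simp [Ring.lie_def]

end Algebra

variable [Algebra ℂ B] {𝒜 : Subalgebra ℂ B}

theorem coe_commPoly (n : ℕ) (a : Fin n → 𝒜) :
    ((commPoly n a : 𝒜) : B) = commPoly n (fun i => (a i : B)) := by
  match n with
  | 0 => rfl
  | 1 => rfl
  | m + 2 =>
    have ih := coe_commPoly (m + 1) (Fin.init a)
    rw [commPoly_succ, commPoly_succ, Ring.lie_def, Ring.lie_def, Subalgebra.coe_sub,
      Subalgebra.coe_mul, Subalgebra.coe_mul, ih]
    rfl

theorem IsDerivOn.map_commPoly {D : 𝒜 →ₗ[ℂ] B} (hD : IsDerivOn 𝒜 D) (n : ℕ) (a : Fin n → 𝒜) :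
    D (commPoly n a) = commPolyVariation n (fun i => (a i : B)) (fun i => D (a i)) := by
  match n with
  | 0 => simp [commPolyVariation, commPoly]
  | 1 => simp [commPolyVariation_one, commPoly]
  | m + 2 =>
    have ih := hD.map_commPoly (m + 1) (Fin.init a)
    have hcoe := coe_commPoly (m + 1) (Fin.init a)
    have hinit : ∀ F : 𝒜 → B, Fin.init (fun i => F (a i)) = fun i => F (Fin.init a i) :=
      fun _ => rfl
    rw [commPolyVariation_succ, commPoly_succ, hinit, hinit, ← ih, ← hcoe]
    simp only [Ring.lie_def, map_sub, hD (_ : 𝒜) _]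
    abel

theorem IsLieNDeriv.smul_commPoly_eq {m : ℕ} {L D : 𝒜 →ₗ[ℂ] B}
    (hL : IsLieNDeriv 𝒜 (m + 2) L) (hD : IsDerivOn 𝒜 D) {t : ℂ} {τ : 𝒜 → ℂ}
    (hDL : ∀ A, D A = L A + t • (A : B) + τ A • 1) (a : Fin (m + 2) → 𝒜) :
    ((m + 1) * t) • ((commPoly (m + 2) a : 𝒜) : B) = τ (commPoly (m + 2) a) • 1 := by
  have hDa : (fun i => D (a i)) =
      (fun i => L (a i)) + t • (fun i => (a i : B)) + (fun i => τ (a i) • 1) :=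
    funext fun i => hDL (a i)
  have hvar : D (commPoly (m + 2) a) =
      L (commPoly (m + 2) a) + (((m + 2 : ℕ) : ℂ) * t) • ((commPoly (m + 2) a : 𝒜) : B) := by
    rw [hD.map_commPoly, hDa, commPolyVariation_add, commPolyVariation_add,
      commPolyVariation_smul_self, commPolyVariation_smul_one, add_zero, coe_commPoly, hL a]
    rfl
  have hcompare := (hDL _).symm.trans hvar
  rw [add_assoc, add_right_inj, ← eq_sub_iff_add_eq'] at hcompare
  rw [hcompare]
  push_cast
  module

end CommPoly

section HasLieDeriv

attribute [local instance] LieRing.ofAssociativeRing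

variable {R B : Type*} [CommRing R] [Ring B] [Algebra R B] {𝒜 : Subalgebra R B} {L : B →ₗ[R] B}
  {e c E C : B}

/-- On brackets `⁅e, c⁆` with `c` in `𝒜`, the map `L` obeys the Leibniz rule of a Lie derivation,
except that `E` takes the place of `L e`. The commutators `e = p_{n-1}(a)` are of this kind when `L`
is a Lie `n`-derivation. -/
def HasLieDeriv (𝒜 : Subalgebra R B) (L : B →ₗ[R] B) (e E : B) : Prop :=
  ∀ c ∈ 𝒜, L ⁅e, c⁆ = ⁅E, c⁆ + ⁅e, L c⁆

namespace HasLieDeriv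

theorem lie_sub_eq (he : HasLieDeriv 𝒜 L e E) (heA : e ∈ 𝒜) (hc : HasLieDeriv 𝒜 L c C)
    (hcA : c ∈ 𝒜) : ⁅E - L e, c⁆ = ⁅e, C - L c⁆ := by
  have hec : ⁅E, c⁆ + ⁅e, L c⁆ = ⁅e, C⁆ + ⁅L e, c⁆ := by
    rw [← he c hcA, ← lie_skew, map_neg, hc e heA, neg_add, lie_skew, lie_skew]
  rw [sub_lie, lie_sub, sub_eq_sub_iff_add_eq_add, hec]

theorem sub_smul_one (he : HasLieDeriv 𝒜 L e E) (s : R) : HasLieDeriv 𝒜 L e (E - s • 1) := by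
  intro c hc
  have hscalar : ⁅s • (1 : B), c⁆ = 0 := by simp [Ring.lie_def]
  rw [he c hc, sub_lie, hscalar, sub_zero]

theorem add_smul_id {t : R} (he : HasLieDeriv 𝒜 L e (L e + t • e)) :
    HasLieDeriv 𝒜 (L + t • .id) e ((L + t • .id : B →ₗ[R] B) e) := by
  intro c hc
  simp only [LinearMap.add_apply, LinearMap.smul_apply, LinearMap.id_apply, he c hc, add_lie,
    lie_add, lie_smul t, smul_lie]
  abel

end HasLieDeriv

theorem IsLieNDeriv.hasLieDeriv_commPoly [Algebra ℂ B] {𝒜 : Subalgebra ℂ B} {m : ℕ}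
    {L : 𝒜 →ₗ[ℂ] B} (hL : IsLieNDeriv 𝒜 (m + 2) L) {L' : B →ₗ[ℂ] B} (hL' : ∀ A : 𝒜, L' A = L A)
    (a : Fin (m + 1) → 𝒜) :
    HasLieDeriv 𝒜 L' (commPoly (m + 1) (fun i => (a i : B)))
      (commPolyVariation (m + 1) (fun i => (a i : B)) (fun i => L (a i))) := by
  intro c hc
  lift c to 𝒜 using hc
  have hinit (F : 𝒜 → B) : Fin.init (fun i => F ((Fin.snoc a c : Fin (m + 2) → 𝒜) i)) =
      fun i => F (a i) := by
    ext i
    simp [Fin.init]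
  have hcomm : ⁅commPoly (m + 1) (fun i => (a i : B)), (c : B)⁆ =
      (commPoly (m + 2) (Fin.snoc a c) : 𝒜) := by
    rw [coe_commPoly, commPoly_succ, hinit Subtype.val, Fin.snoc_last]
  have hvar : L (commPoly (m + 2) (Fin.snoc a c)) = commPolyVariation (m + 2) _ _ :=
    hL (Fin.snoc a c)
  rw [hcomm, hL', hvar, commPolyVariation_succ, hinit, hinit, Fin.snoc_last, hL']

end HasLieDeriv

section TopologicalModule

attribute [local instance] LieRing.ofAssociativeRing

variable {R X : Type*} [Ring R] [AddCommGroup X] [Module R X] [TopologicalSpace X]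
  [IsTopologicalAddGroup X] {N : Submodule R X} {w : X}

theorem commPoly_mem_and_apply_eq_zero (m : ℕ) {b : Fin (m + 1) → X →L[R] X}
    (hN : ∀ i v, b i v ∈ N) (hw : ∀ i, b i w = 0) :
    (∀ v, commPoly (m + 1) b v ∈ N) ∧ commPoly (m + 1) b w = 0 := by
  induction m with
  | zero => exact ⟨hN 0, hw 0⟩
  | succ m ih =>
    obtain ⟨ihN, ihw⟩ := ih (b := Fin.init b) (fun i => hN _) (fun i => hw _)
    rw [commPoly_succ, Ring.lie_def]
    exact ⟨fun v => N.sub_mem (ihN _) (hN _ _), by simp [ihw, hw]⟩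

theorem commPolyVariation_apply_mem (m : ℕ) {b : Fin (m + 2) → X →L[R] X}
    (hN : ∀ i v, b i v ∈ N) (hw : ∀ i, b i w = 0) (F : Fin (m + 2) → X →L[R] X) :
    commPolyVariation (m + 2) b F w ∈ N := by
  obtain ⟨hinitN, hinitw⟩ := commPoly_mem_and_apply_eq_zero m (b := Fin.init b)
    (fun i => hN _) (fun i => hw _)
  rw [commPolyVariation_succ]
  simpa [Ring.lie_def, hw, hinitw] using N.add_mem (N.neg_mem (hN _ _)) (hinitN _)

end TopologicalModule

section RankOne

open ContinuousLinearMap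

attribute [local instance] LieRing.ofAssociativeRing

variable {𝕜 X Y : Type*} [NontriviallyNormedField 𝕜] [NormedAddCommGroup X] [NormedSpace 𝕜 X]
  [NormedAddCommGroup Y] [NormedSpace 𝕜 Y]

theorem smulRight_ne_zero_iff {f : X →L[𝕜] 𝕜} {y : Y} : f.smulRight y ≠ 0 ↔ f ≠ 0 ∧ y ≠ 0 := by
  refine ⟨fun h => ⟨?_, ?_⟩, fun ⟨hf, hy⟩ => ?_⟩
  · rintro rfl
    exact h zero_smulRight
  · rintro rfl
    exact h f.smulRight_zero
  · obtain ⟨v, hv⟩ := DFunLike.ne_iff.1 hf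
    exact DFunLike.ne_iff.2 ⟨v, smul_ne_zero hv hy⟩

theorem mul_smulRight (A : X →L[𝕜] X) (f : X →L[𝕜] 𝕜) (x : X) :
    A * f.smulRight x = f.smulRight (A x) := by
  ext v
  simp

theorem lie_smulRight_smulRight (f k : X →L[𝕜] 𝕜) (x z : X) :
    ⁅f.smulRight x, k.smulRight z⁆ = f z • k.smulRight x - k x • f.smulRight z := by
  ext v
  simp [Ring.lie_def, smul_smul, mul_comm]

theorem lie_smulRight_smulRight_ne_zero {f k : X →L[𝕜] 𝕜} {x z : X} (hfz : f z ≠ 0) (hkx : k x = 0)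
    (hk : k ≠ 0) (hx : x ≠ 0) : ⁅f.smulRight x, k.smulRight z⁆ ≠ 0 := by
  rw [lie_smulRight_smulRight, hkx, zero_smul, sub_zero]
  exact smul_ne_zero hfz (smulRight_ne_zero_iff.2 ⟨hk, hx⟩)

theorem exists_eq_smul_smulRight {U : Submodule 𝕜 X} (hU : Dense (U : Set X)) {f : X →L[𝕜] 𝕜}
    {u : X} (hu : u ∈ U) (hfu : f u = 1) {T : X →L[𝕜] Y} {y : Y} (hTu : T u ∈ 𝕜 ∙ y)
    (hker : ∀ z ∈ U, f z = 0 → T z = 0) : ∃ t : 𝕜, T = t • f.smulRight y := by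
  obtain ⟨t, ht⟩ := Submodule.mem_span_singleton.1 hTu
  refine ⟨t, DFunLike.coe_injective (T.continuous.ext_on hU (map_continuous _) fun z hz => ?_)⟩
  have hz' := hker (z - f z • u) (U.sub_mem hz (U.smul_mem _ hu)) (by simp [hfu])
  rw [map_sub, map_smul, sub_eq_zero, ← ht, smul_comm] at hz'
  exact hz'

theorem apply_eq_of_lie_smulRight_eq {T Q : X →L[𝕜] X} {f k : X →L[𝕜] 𝕜} {x w z : X}
    (h : ⁅T, k.smulRight z⁆ = ⁅f.smulRight x, Q⁆) (hkw : k w = 1) (hfw : f w = 0) :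
    T z = k (T w) • z + f (Q w) • x := by
  have hw := congr($h w)
  simp only [Ring.lie_def, sub_apply, mul_apply_eq_comp, smulRight_apply, hkw, hfw, one_smul,
    zero_smul, map_zero, sub_zero] at hw
  exact sub_eq_iff_eq_add'.1 hw

end RankOne

section Nest

open ContinuousLinearMap

variable {X : Type*} [NormedAddCommGroup X] [NormedSpace ℂ X] {𝒩 : Set (Submodule ℂ X)}
  {m : ℕ} {K N : Submodule ℂ X} {f : X →L[ℂ] ℂ}

theorem annihilatorOf_anti (h : K ≤ N) : annihilatorOf N ≤ annihilatorOf K :=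
  fun _ hf v hv => hf v (h hv)

theorem exists_mem_annihilatorOf_apply_eq_one (hN : IsClosed (N : Set X)) {y : X} (hy : y ∉ N) :
    ∃ k ∈ annihilatorOf N, k y = 1 := by
  have : IsClosed (N : Set X) := hN
  obtain ⟨g, hg⟩ := SeparatingDual.exists_eq_one (R := ℂ) (x := N.mkQ y) (by simpa using hy)
  exact ⟨g.comp N.mkQL, fun v hv => by simp [(Submodule.Quotient.mk_eq_zero N).2 hv], hg⟩

/-- The members of the nest `𝒩` other than `X`. -/
def properMembers (𝒩 : Set (Submodule ℂ X)) : Set (Submodule ℂ X) := {N | N ∈ 𝒩 ∧ N ≠ ⊤}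

/-- The linear span of the proper members of the nest, whose closure is `X₋`. -/
def properSpan (𝒩 : Set (Submodule ℂ X)) : Submodule ℂ X := sSup (properMembers 𝒩)

theorem le_properSpan (hK : K ∈ properMembers 𝒩) : K ≤ properSpan 𝒩 := le_sSup hK

/-- `ProperChain 𝒩 K m N` holds if there are proper members `K = N₀ < N₁ < ⋯ < N_m = N` of the
nest `𝒩`. -/
inductive ProperChain (𝒩 : Set (Submodule ℂ X)) (K : Submodule ℂ X) : ℕ → Submodule ℂ X → Prop
  | refl : K ∈ properMembers 𝒩 → ProperChain 𝒩 K 0 K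
  | step {m : ℕ} {N N' : Submodule ℂ X} :
    ProperChain 𝒩 K m N → N' ∈ properMembers 𝒩 → N < N' → ProperChain 𝒩 K (m + 1) N'

namespace ProperChain

theorem left_mem (h : ProperChain 𝒩 K m N) : K ∈ properMembers 𝒩 := by
  induction h with
  | refl hK => exact hK
  | step _ _ _ ih => exact ih

theorem right_mem (h : ProperChain 𝒩 K m N) : N ∈ properMembers 𝒩 := by
  cases h with
  | refl hK => exact hK
  | step _ hN _ => exact hN

theorem le (h : ProperChain 𝒩 K m N) : K ≤ N := by
  induction h with
  | refl => exact le_rfl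
  | step _ _ hlt ih => exact ih.trans hlt.le

end ProperChain

/-- The rank-one operators `v ↦ f v • x` such that `x` lies in a proper member `K` of the nest and
`f` vanishes on a member `N` lying `m` steps above `K`. -/
def chainRankOnes (𝒩 : Set (Submodule ℂ X)) (m : ℕ) : Set (X →L[ℂ] X) :=
  {e | ∃ K N, ProperChain 𝒩 K m N ∧ ∃ x ∈ K, ∃ f ∈ annihilatorOf N, e = f.smulRight x}

theorem ProperChain.smulRight_mem (h : ProperChain 𝒩 K m N) {x : X} (hx : x ∈ K)
    (hf : f ∈ annihilatorOf N) : f.smulRight x ∈ chainRankOnes 𝒩 m :=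
  ⟨K, N, h, x, hx, f, hf, rfl⟩

theorem chainRankOnes_succ_subset : chainRankOnes 𝒩 (m + 1) ⊆ chainRankOnes 𝒩 m := by
  rintro _ ⟨K, N', _ | @⟨_, N, _, h, -, hlt⟩, x, hx, f, hf, rfl⟩
  exact h.smulRight_mem hx (annihilatorOf_anti hlt.le hf)

theorem mul_mem_chainRankOnes {A e : X →L[ℂ] X} (hA : A ∈ nestAlgebra 𝒩)
    (he : e ∈ chainRankOnes 𝒩 m) : A * e ∈ chainRankOnes 𝒩 m := by
  obtain ⟨K, N, h, x, hx, f, hf, rfl⟩ := he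
  exact mul_smulRight A f x ▸ h.smulRight_mem (hA K h.left_mem.1 x hx) hf

theorem mul_self_eq_zero_of_mem_chainRankOnes {e : X →L[ℂ] X} (he : e ∈ chainRankOnes 𝒩 m) :
    e * e = 0 := by
  obtain ⟨K, N, h, x, hx, f, hf, rfl⟩ := he
  rw [mul_smulRight, smulRight_apply, hf x (h.le hx), zero_smul, smulRight_zero]

namespace IsNest

variable (h𝒩 : IsNest 𝒩)
include h𝒩

theorem smulRight_mem_nestAlgebra (hN : N ∈ 𝒩) {x : X} (hx : x ∈ N)
    (hf : f ∈ annihilatorOf N) : f.smulRight x ∈ nestAlgebra 𝒩 := by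
  intro M hM v hv
  rcases h𝒩.total M hM N hN with hMN | hNM
  · simp [hf v (hMN hv)]
  · exact M.smul_mem _ (hNM hx)

theorem chainRankOnes_subset_nestAlgebra : chainRankOnes 𝒩 m ⊆ nestAlgebra 𝒩 := by
  rintro _ ⟨K, N, h, x, hx, f, hf, rfl⟩
  exact h𝒩.smulRight_mem_nestAlgebra h.right_mem.1 (h.le hx) hf

theorem exists_commPoly_eq_smulRight (h : ProperChain 𝒩 K m N) {x : X} (hx : x ∈ K)
    (hf : f ∈ annihilatorOf N) {w : X} (hw : w ∉ N) (hfw : f w = 0) :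
    ∃ a : Fin (m + 1) → X →L[ℂ] X, (∀ i, a i ∈ nestAlgebra 𝒩) ∧ (∀ i v, a i v ∈ N) ∧
      (∀ i, a i w = 0) ∧ commPoly (m + 1) a = f.smulRight x := by
  induction h generalizing f with
  | refl hK =>
    exact ⟨fun _ => f.smulRight x, fun _ => h𝒩.smulRight_mem_nestAlgebra hK.1 hx hf,
      fun _ v => K.smul_mem _ hx, fun _ => by simp [hfw], rfl⟩
  | @step m N N' hKN hN' hlt ih =>
    obtain ⟨y, hyN', hyN⟩ := SetLike.exists_of_lt hlt
    have hmodular : (N ⊔ ℂ ∙ w) ⊓ N' = N := by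
      have hdisj : Disjoint (ℂ ∙ w) N' :=
        (Submodule.disjoint_span_singleton_of_notMem hw).symm
      rw [sup_inf_assoc_of_le _ hlt.le, hdisj.eq_bot, sup_bot_eq]
    have hy : y ∉ N ⊔ ℂ ∙ w := fun hy => hyN (hmodular.le ⟨hy, hyN'⟩)
    obtain ⟨g, hg, hgy⟩ := exists_mem_annihilatorOf_apply_eq_one
      (N.isClosed_sup_finiteDimensional (ℂ ∙ w) (h𝒩.closed N hKN.right_mem.1)) hy
    obtain ⟨a, haA, haN, haw, hcomm⟩ := ih (annihilatorOf_anti le_sup_left hg)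
      (fun hwN => hw (hlt.le hwN))
      (hg w (Submodule.mem_sup_right (Submodule.mem_span_singleton_self w)))
    refine ⟨Fin.snoc a (f.smulRight y), ?_, ?_, ?_, ?_⟩
    · refine Fin.lastCases ?_ fun i => ?_
      · simpa using h𝒩.smulRight_mem_nestAlgebra hN'.1 hyN' hf
      · simpa using haA i
    · refine Fin.lastCases ?_ fun i v => ?_
      · simpa using fun v => N'.smul_mem (f v) hyN'
      · simpa using hlt.le (haN i v)
    · refine Fin.lastCases ?_ fun i => ?_
      · simp [hfw]
      · simpa using haw i
    · rw [commPoly_succ, Fin.init_snoc, Fin.snoc_last, hcomm, lie_smulRight_smulRight, hgy,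
        hf x (hlt.le (hKN.le hx)), one_smul, zero_smul, sub_zero]

end IsNest

end Nest

section UnboundedNest

attribute [local instance] LieRing.ofAssociativeRing

variable {X : Type*} [NormedAddCommGroup X] [NormedSpace ℂ X] {𝒩 : Set (Submodule ℂ X)}
  {K : Submodule ℂ X}

/-- A nest on a nonzero space with `X₋ = X`. Its proper members then have no greatest element and
their union is a dense subspace. -/
structure IsUnboundedNest (𝒩 : Set (Submodule ℂ X)) : Prop extends IsNest 𝒩 where
  bot_ne_top : (⊥ : Submodule ℂ X) ≠ ⊤
  xminus_eq_top : nestXminus 𝒩 = ⊤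

theorem IsNest.isUnboundedNest [Nontrivial X] (h𝒩 : IsNest 𝒩)
    (hann : annihilatorOf (nestXminus 𝒩) = ⊥) : IsUnboundedNest 𝒩 where
  toIsNest := h𝒩
  bot_ne_top := bot_ne_top
  xminus_eq_top := by
    by_contra hne
    obtain ⟨y, -, hy⟩ := SetLike.exists_of_lt (lt_top_iff_ne_top.2 hne)
    obtain ⟨k, hk, hky⟩ :=
      exists_mem_annihilatorOf_apply_eq_one (Submodule.isClosed_topologicalClosure _) hy
    have hk0 : k = 0 := (Submodule.mem_bot ℂ).1 (hann.le hk)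
    simp [hk0] at hky

namespace IsUnboundedNest

variable (h𝒩 : IsUnboundedNest 𝒩)
include h𝒩

theorem dense_properSpan : Dense (properSpan 𝒩 : Set X) :=
  Submodule.dense_iff_topologicalClosure_eq_top.2 h𝒩.xminus_eq_top

theorem exists_gt (hK : K ∈ properMembers 𝒩) : ∃ M ∈ properMembers 𝒩, K < M := by
  by_contra! h
  refine hK.2 (top_le_iff.1 ?_)
  rw [← h𝒩.xminus_eq_top]
  refine Submodule.topologicalClosure_minimal _ (sSup_le fun M hM => ?_) (h𝒩.closed K hK.1)
  exact (h𝒩.total M hM.1 K hK.1).elim id fun hKM => not_lt_iff_le_imp_ge.1 (h M hM) hKM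

theorem sup_mem_properMembers {M : Submodule ℂ X} (hK : K ∈ properMembers 𝒩)
    (hM : M ∈ properMembers 𝒩) : K ⊔ M ∈ properMembers 𝒩 := by
  rcases h𝒩.total K hK.1 M hM.1 with h | h
  · rwa [sup_eq_right.2 h]
  · rwa [sup_eq_left.2 h]

theorem mem_properSpan {v : X} : v ∈ properSpan 𝒩 ↔ ∃ K ∈ properMembers 𝒩, v ∈ K :=
  Submodule.mem_sSup_of_directed ⟨⊥, h𝒩.bot_mem, h𝒩.bot_ne_top⟩ fun K hK M hM =>
    ⟨K ⊔ M, h𝒩.sup_mem_properMembers hK hM, le_sup_left, le_sup_right⟩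

theorem exists_properMembers_ge (hK : K ∈ properMembers 𝒩) {u v : X} (hu : u ∈ properSpan 𝒩)
    (hv : v ∈ properSpan 𝒩) : ∃ M ∈ properMembers 𝒩, K ≤ M ∧ u ∈ M ∧ v ∈ M := by
  obtain ⟨Ku, hKu, huK⟩ := h𝒩.mem_properSpan.1 hu
  obtain ⟨Kv, hKv, hvK⟩ := h𝒩.mem_properSpan.1 hv
  refine ⟨K ⊔ (Ku ⊔ Kv), h𝒩.sup_mem_properMembers hK (h𝒩.sup_mem_properMembers hKu hKv),
    le_sup_left, ?_, ?_⟩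
  · exact Submodule.mem_sup_right (Submodule.mem_sup_left huK)
  · exact Submodule.mem_sup_right (Submodule.mem_sup_right hvK)

theorem apply_mem_properSpan {A : X →L[ℂ] X} (hA : A ∈ nestAlgebra 𝒩) {v : X}
    (hv : v ∈ properSpan 𝒩) : A v ∈ properSpan 𝒩 := by
  obtain ⟨K, hK, hvK⟩ := h𝒩.mem_properSpan.1 hv
  exact le_properSpan hK (hA K hK.1 v hvK)

theorem exists_mem_properSpan_apply_ne_zero {f : X →L[ℂ] ℂ} (hf : f ≠ 0) :
    ∃ u ∈ properSpan 𝒩, f u ≠ 0 := by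
  by_contra! h
  exact hf (DFunLike.coe_injective (f.continuous.ext_on h𝒩.dense_properSpan continuous_const h))

theorem exists_mem_properSpan_apply_eq_one {f : X →L[ℂ] ℂ} (hf : f ≠ 0) :
    ∃ u ∈ properSpan 𝒩, f u = 1 := by
  obtain ⟨u, hu, hfu⟩ := h𝒩.exists_mem_properSpan_apply_ne_zero hf
  exact ⟨(f u)⁻¹ • u, Submodule.smul_mem _ _ hu, by simp [hfu]⟩

theorem exists_mem_properMembers_ne_zero : ∃ K ∈ properMembers 𝒩, ∃ x ∈ K, x ≠ 0 := by
  obtain ⟨K, hK, hlt⟩ := h𝒩.exists_gt ⟨h𝒩.bot_mem, h𝒩.bot_ne_top⟩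
  exact ⟨K, hK, (Submodule.ne_bot_iff K).1 hlt.ne'⟩

theorem exists_properChain (hK : K ∈ properMembers 𝒩) (m : ℕ) : ∃ N, ProperChain 𝒩 K m N := by
  induction m with
  | zero => exact ⟨K, .refl hK⟩
  | succ m ih =>
    obtain ⟨N, hKN⟩ := ih
    obtain ⟨N', hN', hlt⟩ := h𝒩.exists_gt hKN.right_mem
    exact ⟨N', hKN.step hN' hlt⟩

theorem exists_annihilatorOf_apply_eq_one {N : Submodule ℂ X} (hN : N ∈ properMembers 𝒩) :
    ∃ k ∈ annihilatorOf N, ∃ y ∈ properSpan 𝒩, k y = 1 := by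
  obtain ⟨M, hM, hlt⟩ := h𝒩.exists_gt hN
  obtain ⟨y, hyM, hyN⟩ := SetLike.exists_of_lt hlt
  obtain ⟨k, hk, hky⟩ := exists_mem_annihilatorOf_apply_eq_one (h𝒩.closed N hN.1) hyN
  exact ⟨k, hk, y, le_properSpan hM hyM, hky⟩

theorem exists_annihilatorOf_apply_eq_one_and_apply_eq_zero {N : Submodule ℂ X}
    (hN : N ∈ properMembers 𝒩) {f : X →L[ℂ] ℂ} {u : X} (hu : u ∈ N) (hfu : f u = 1) :
    ∃ k ∈ annihilatorOf N, ∃ w ∈ properSpan 𝒩, k w = 1 ∧ f w = 0 := by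
  obtain ⟨k, hk, y, hy, hky⟩ := h𝒩.exists_annihilatorOf_apply_eq_one hN
  exact ⟨k, hk, y - f y • u, sub_mem hy (Submodule.smul_mem _ _ (le_properSpan hN hu)),
    by simp [hky, hk u hu], by simp [hfu]⟩

theorem exists_annihilatorOf_ne_zero {N : Submodule ℂ X} (hN : N ∈ properMembers 𝒩) :
    ∃ k ∈ annihilatorOf N, k ≠ 0 := by
  obtain ⟨k, hk, y, -, hky⟩ := h𝒩.exists_annihilatorOf_apply_eq_one hN
  exact ⟨k, hk, fun hk0 => by simp [hk0] at hky⟩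

theorem ext_chainRankOnes {m : ℕ} {P Q : X →L[ℂ] X}
    (h : ∀ e ∈ chainRankOnes 𝒩 m, P * e = Q * e) : P = Q := by
  refine DFunLike.coe_injective
    (P.continuous.ext_on h𝒩.dense_properSpan Q.continuous fun x hx => ?_)
  obtain ⟨K, hK, hxK⟩ := h𝒩.mem_properSpan.1 hx
  obtain ⟨N, hKN⟩ := h𝒩.exists_properChain hK m
  obtain ⟨k, hk, y, -, hky⟩ := h𝒩.exists_annihilatorOf_apply_eq_one hKN.right_mem
  simpa [hky] using congr($(h _ (hKN.smulRight_mem hxK hk)) y)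

theorem exists_chainRankOnes_lie_ne_zero {m : ℕ} {e e' : X →L[ℂ] X} (he : e ∈ chainRankOnes 𝒩 m)
    (he0 : e ≠ 0) (he' : e' ∈ chainRankOnes 𝒩 m) (he0' : e' ≠ 0) :
    ∃ c ∈ chainRankOnes 𝒩 m, ⁅e, c⁆ ≠ 0 ∧ ⁅e', c⁆ ≠ 0 := by
  obtain ⟨K, N, hKN, x, hx, f, -, rfl⟩ := he
  obtain ⟨K', N', hKN', x', hx', f', -, rfl⟩ := he'
  obtain ⟨hf0, hx0⟩ := smulRight_ne_zero_iff.1 he0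
  obtain ⟨hf0', hx0'⟩ := smulRight_ne_zero_iff.1 he0'
  obtain ⟨z, hz, hfz⟩ := Module.Dual.exists_forall_mem_ne_zero_of_forall_exists (properSpan 𝒩)
    ![f.toLinearMap, f'.toLinearMap] <| Fin.forall_fin_two.2
      ⟨h𝒩.exists_mem_properSpan_apply_ne_zero hf0, h𝒩.exists_mem_properSpan_apply_ne_zero hf0'⟩
  obtain ⟨hfz, hfz'⟩ := Fin.forall_fin_two.1 hfz
  obtain ⟨P, hP, hle, hzP, -⟩ := h𝒩.exists_properMembers_ge
    (h𝒩.sup_mem_properMembers hKN.right_mem hKN'.right_mem) hz hz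
  obtain ⟨Q, hPQ⟩ := h𝒩.exists_properChain hP m
  obtain ⟨k, hk, hk0⟩ := h𝒩.exists_annihilatorOf_ne_zero hPQ.right_mem
  have hkN : k ∈ annihilatorOf (N ⊔ N') := annihilatorOf_anti (hle.trans hPQ.le) hk
  exact ⟨k.smulRight z, hPQ.smulRight_mem hzP hk,
    lie_smulRight_smulRight_ne_zero hfz (hkN x (Submodule.mem_sup_left (hKN.le hx))) hk0 hx0,
    lie_smulRight_smulRight_ne_zero hfz' (hkN x' (Submodule.mem_sup_right (hKN'.le hx'))) hk0 hx0'⟩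

theorem exists_ne_zero_mem_chainRankOnes (m : ℕ) : ∃ e ∈ chainRankOnes 𝒩 m, e ≠ 0 := by
  obtain ⟨K, hK, x, hx, hx0⟩ := h𝒩.exists_mem_properMembers_ne_zero
  obtain ⟨N, hKN⟩ := h𝒩.exists_properChain hK m
  obtain ⟨k, hk, hk0⟩ := h𝒩.exists_annihilatorOf_ne_zero hKN.right_mem
  exact ⟨_, hKN.smulRight_mem hx hk, smulRight_ne_zero_iff.2 ⟨hk0, hx0⟩⟩

theorem exists_add_mem_chainRankOnes {m : ℕ} {e e' : X →L[ℂ] X} (he : e ∈ chainRankOnes 𝒩 m)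
    (he0 : e ≠ 0) (he' : e' ∈ chainRankOnes 𝒩 m) (he0' : e' ≠ 0) :
    ∃ c ∈ chainRankOnes 𝒩 m, ∃ c' ∈ chainRankOnes 𝒩 m, c ≠ 0 ∧ c' ≠ 0 ∧
      e + c ∈ chainRankOnes 𝒩 m ∧ c + c' ∈ chainRankOnes 𝒩 m ∧ c' + e' ∈ chainRankOnes 𝒩 m := by
  obtain ⟨K, N, hKN, x, hx, f, hf, rfl⟩ := he
  obtain ⟨K', N', hKN', x', hx', f', hf', rfl⟩ := he'
  obtain ⟨P, hPQ⟩ := h𝒩.exists_properChain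
    (h𝒩.sup_mem_properMembers hKN.right_mem hKN'.right_mem) m
  obtain ⟨k, hk, hk0⟩ := h𝒩.exists_annihilatorOf_ne_zero hPQ.right_mem
  have hkN : k ∈ annihilatorOf N := annihilatorOf_anti (le_sup_left.trans hPQ.le) hk
  have hkN' : k ∈ annihilatorOf N' := annihilatorOf_anti (le_sup_right.trans hPQ.le) hk
  -- `c = x ⊗ k` and `c' = x' ⊗ k`: two consecutive operators share a vector or a functional.
  have hxx' : x + x' ∈ N ⊔ N' := Submodule.add_mem_sup (hKN.le hx) (hKN'.le hx')
  refine ⟨k.smulRight x, hKN.smulRight_mem hx hkN, k.smulRight x', hKN'.smulRight_mem hx' hkN',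
    smulRight_ne_zero_iff.2 ⟨hk0, (smulRight_ne_zero_iff.1 he0).2⟩,
    smulRight_ne_zero_iff.2 ⟨hk0, (smulRight_ne_zero_iff.1 he0').2⟩, ?_, ?_, ?_⟩
  · convert hKN.smulRight_mem hx (add_mem hf hkN) using 1
    ext; simp [add_smul]
  · convert hPQ.smulRight_mem hxx' hk using 1
    ext; simp
  · convert hKN'.smulRight_mem hx' (add_mem hkN' hf') using 1
    ext; simp [add_smul]

theorem exists_notMem_apply_eq_zero {N : Submodule ℂ X} (hN : N ∈ properMembers 𝒩)
    (f : X →L[ℂ] ℂ) : ∃ w, w ∉ N ∧ f w = 0 := by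
  rcases eq_or_ne f 0 with rfl | hf0
  · obtain ⟨w, -, hw⟩ := SetLike.exists_of_lt (lt_top_iff_ne_top.2 hN.2)
    exact ⟨w, hw, rfl⟩
  · obtain ⟨u, hu, hfu⟩ := h𝒩.exists_mem_properSpan_apply_eq_one hf0
    obtain ⟨M, hM, hNM, huM, -⟩ := h𝒩.exists_properMembers_ge hN hu hu
    obtain ⟨k, hk, w, -, hkw, hfw⟩ :=
      h𝒩.exists_annihilatorOf_apply_eq_one_and_apply_eq_zero hM huM hfu
    exact ⟨w, fun hw => by simp [hk w (hNM hw)] at hkw, hfw⟩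

theorem exists_commPoly_eq {m : ℕ} {e : X →L[ℂ] X} (he : e ∈ chainRankOnes 𝒩 m) :
    ∃ a : Fin (m + 1) → nestAlgebra 𝒩, (commPoly (m + 1) a : nestAlgebra 𝒩) = e := by
  obtain ⟨K, N, hKN, x, hx, f, hf, rfl⟩ := he
  obtain ⟨w, hw, hfw⟩ := h𝒩.exists_notMem_apply_eq_zero hKN.right_mem f
  obtain ⟨a, ha, -, -, hcomm⟩ := h𝒩.exists_commPoly_eq_smulRight hKN hx hf hw hfw
  lift a to Fin (m + 1) → nestAlgebra 𝒩 using ha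
  exact ⟨a, (coe_commPoly _ a).trans hcomm⟩

end IsUnboundedNest

end UnboundedNest

section UniversalScalar

attribute [local instance] LieRing.ofAssociativeRing

variable {X : Type*} [NormedAddCommGroup X] [NormedSpace ℂ X] {𝒩 : Set (Submodule ℂ X)}
  {L : (X →L[ℂ] X) →ₗ[ℂ] (X →L[ℂ] X)} {m : ℕ} (h𝒩 : IsUnboundedNest 𝒩)
  (hL : ∀ e ∈ chainRankOnes 𝒩 m, ∃ E, HasLieDeriv (nestAlgebra 𝒩) L e E)
include h𝒩 hL

theorem exists_hasLieDeriv_sub_apply_mem_span {K N : Submodule ℂ X} (hKN : ProperChain 𝒩 K m N)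
    {x : X} (hx : x ∈ K) {f : X →L[ℂ] ℂ} (hf : f ∈ annihilatorOf N) (hf0 : f ≠ 0) :
    ∃ E, HasLieDeriv (nestAlgebra 𝒩) L (f.smulRight x) E ∧
      ∀ z ∈ properSpan 𝒩, (E - L (f.smulRight x)) z ∈ ℂ ∙ x := by
  set e := f.smulRight x
  have hsubset := h𝒩.chainRankOnes_subset_nestAlgebra (m := m)
  have heR := hKN.smulRight_mem hx hf
  obtain ⟨u, hu, hfu⟩ := h𝒩.exists_mem_properSpan_apply_eq_one hf0
  obtain ⟨E, hE⟩ := hL _ heR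
  -- `E` is only determined up to a scalar operator; this choice makes `f ((E - L e) u)` vanish.
  refine ⟨E - f ((E - L e) u) • 1, hE.sub_smul_one _, fun z hz => ?_⟩
  obtain ⟨K', hK', -, hzK', huK'⟩ := h𝒩.exists_properMembers_ge hKN.right_mem hz hu
  obtain ⟨N', hKN'⟩ := h𝒩.exists_properChain hK' m
  obtain ⟨k, hk, w, -, hkw, hfw⟩ :=
    h𝒩.exists_annihilatorOf_apply_eq_one_and_apply_eq_zero hKN'.right_mem (hKN'.le huK') hfu
  have hprobe : ∀ y ∈ K', ∃ c : ℂ, (E - L e) y = k ((E - L e) w) • y + c • x := by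
    intro y hy
    have hcR := hKN'.smulRight_mem hy hk
    obtain ⟨C, hC⟩ := hL _ hcR
    exact ⟨_, apply_eq_of_lie_smulRight_eq
      (hE.lie_sub_eq (hsubset heR) hC (hsubset hcR)) hkw hfw⟩
  have hfu' : f ((E - L e) u) = k ((E - L e) w) := by
    obtain ⟨c, hc⟩ := hprobe u huK'
    simp [hc, hfu, hf x (hKN.le hx)]
  obtain ⟨c, hc⟩ := hprobe z hzK'
  refine Submodule.mem_span_singleton.2 ⟨c, ?_⟩
  rw [hfu', sub_right_comm, sub_apply, hc]
  simp

theorem exists_hasLieDeriv_add_smul {e : X →L[ℂ] X} (he : e ∈ chainRankOnes 𝒩 m) :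
    ∃ t : ℂ, HasLieDeriv (nestAlgebra 𝒩) L e (L e + t • e) := by
  obtain ⟨K, N, hKN, x, hx, f, hf, rfl⟩ := he
  rcases eq_or_ne f 0 with rfl | hf0
  · exact ⟨0, fun c _ => by simp⟩
  set e := f.smulRight x
  have hsubset := h𝒩.chainRankOnes_subset_nestAlgebra (m := m)
  obtain ⟨E, hE, hEx⟩ := exists_hasLieDeriv_sub_apply_mem_span h𝒩 hL hKN hx hf hf0
  obtain ⟨u, hu, hfu⟩ := h𝒩.exists_mem_properSpan_apply_eq_one hf0
  obtain ⟨t, ht⟩ : ∃ t : ℂ, E - L e = t • e := by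
    refine exists_eq_smul_smulRight h𝒩.dense_properSpan hu hfu (hEx u hu) fun z hz hfz => ?_
    obtain ⟨K', hK', hNK', hzK', huK'⟩ := h𝒩.exists_properMembers_ge hKN.right_mem hz hu
    obtain ⟨N', hKN'⟩ := h𝒩.exists_properChain hK' m
    obtain ⟨k, hk, w, hw, hkw, hfw⟩ :=
      h𝒩.exists_annihilatorOf_apply_eq_one_and_apply_eq_zero hKN'.right_mem (hKN'.le huK') hfu
    obtain ⟨C, hC, hCz⟩ := exists_hasLieDeriv_sub_apply_mem_span h𝒩 hL hKN' hzK' hk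
      (by rintro rfl; simp at hkw)
    obtain ⟨r, hr⟩ := Submodule.mem_span_singleton.1 (hEx w hw)
    obtain ⟨s, hs⟩ := Submodule.mem_span_singleton.1 (hCz w hw)
    have hkx : k x = 0 := hk x (hKN'.le (hNK' (hKN.le hx)))
    rw [apply_eq_of_lie_smulRight_eq (hE.lie_sub_eq (hsubset (hKN.smulRight_mem hx hf)) hC
      (hsubset (hKN'.smulRight_mem hzK' hk))) hkw hfw, ← hr, ← hs]
    simp [hkx, hfz]
  exact ⟨t, by rwa [← ht, add_sub_cancel]⟩

theorem exists_forall_hasLieDeriv_add_smul :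
    ∃ t : ℂ, ∀ e ∈ chainRankOnes 𝒩 m, HasLieDeriv (nestAlgebra 𝒩) L e (L e + t • e) := by
  have hsubset := h𝒩.chainRankOnes_subset_nestAlgebra (m := m)
  have hscalar {e c : X →L[ℂ] X} (he : e ∈ chainRankOnes 𝒩 m) (hc : c ∈ chainRankOnes 𝒩 m)
      (hec : ⁅e, c⁆ ≠ 0) {s t : ℂ} (hs : HasLieDeriv (nestAlgebra 𝒩) L e (L e + s • e))
      (ht : HasLieDeriv (nestAlgebra 𝒩) L c (L c + t • c)) : s = t := by
    have hswap := hs.lie_sub_eq (hsubset he) ht (hsubset hc)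
    rw [add_sub_cancel_left, add_sub_cancel_left, smul_lie, lie_smul t] at hswap
    exact smul_left_injective ℂ hec hswap
  obtain ⟨e₀, he₀, he₀0⟩ := h𝒩.exists_ne_zero_mem_chainRankOnes m
  obtain ⟨t₀, ht₀⟩ := exists_hasLieDeriv_add_smul h𝒩 hL he₀
  refine ⟨t₀, fun e he => ?_⟩
  rcases eq_or_ne e 0 with rfl | he0
  · exact fun c _ => by simp
  obtain ⟨t, ht⟩ := exists_hasLieDeriv_add_smul h𝒩 hL he
  obtain ⟨c, hc, hec, he₀c⟩ := h𝒩.exists_chainRankOnes_lie_ne_zero he he0 he₀ he₀0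
  obtain ⟨r, hr⟩ := exists_hasLieDeriv_add_smul h𝒩 hL hc
  rwa [hscalar he₀ hc he₀c ht₀ hr, ← hscalar he hc hec ht hr]

end UniversalScalar

section LeibnizDefect

attribute [local instance] LieRing.ofAssociativeRing

theorem eigenvalue_eq_of_add {R V : Type*} [CommRing R] [AddCommGroup V] [Module R V]
    [IsDomain R] [Module.IsTorsionFree R V] {T : Module.End R V} {v w : V} (hv : v ≠ 0) (hw : w ≠ 0)
    {r s t : R} (hTv : T v = r • v) (hTw : T w = s • w) (hTvw : T (v + w) = t • (v + w)) :
    r = s := by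
  have hdep : (r - t) • v = (t - s) • w := by
    rw [map_add, hTv, hTw] at hTvw
    linear_combination (norm := module) hTvw
  have hTdep : ((r - t) * r) • v = ((t - s) * s) • w := by
    simpa only [map_smul, hTv, hTw, smul_smul] using congr(T $hdep)
  have hrt : ((r - t) * (r - s)) • v = 0 := by
    linear_combination (norm := module) hTdep - s • hdep
  have hts : ((t - s) * (r - s)) • w = 0 := by
    linear_combination (norm := module) hTdep - r • hdep
  by_contra hrs
  have hrs : r - s ≠ 0 := sub_ne_zero.2 hrs
  have hrt := (smul_eq_zero_iff_left hv).1 hrt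
  have hts := (smul_eq_zero_iff_left hw).1 hts
  simp only [mul_eq_zero, hrs, or_false, sub_eq_zero] at hrt hts
  exact hrs (by rw [hrt, hts, sub_self])

/-- The bilinear map `(A, B) ↦ M (A B) - A M(B) - M(A) B`, whose vanishing says that `M` is a
derivation. -/
def leibnizDefect {R B : Type*} [CommRing R] [Ring B] [Algebra R B] (M : B →ₗ[R] B) :
    B →ₗ[R] B →ₗ[R] B :=
  (LinearMap.mul R B).compr₂ M - (LinearMap.mul R B).compl₂ M - LinearMap.mul R B ∘ₗ M

theorem leibnizDefect_apply {R B : Type*} [CommRing R] [Ring B] [Algebra R B] (M : B →ₗ[R] B)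
    (a b : B) : leibnizDefect M a b = M (a * b) - a * M b - M a * b := rfl

variable {X : Type*} [NormedAddCommGroup X] [NormedSpace ℂ X] {𝒩 : Set (Submodule ℂ X)}
  {m : ℕ} {M : (X →L[ℂ] X) →ₗ[ℂ] (X →L[ℂ] X)} (h𝒩 : IsUnboundedNest 𝒩)
  (hM : ∀ e ∈ chainRankOnes 𝒩 m, HasLieDeriv (nestAlgebra 𝒩) M e (M e))
  (hMN : ∀ K N, ProperChain 𝒩 K m N → ∀ x ∈ K, ∀ f ∈ annihilatorOf N, ∀ w ∉ N, f w = 0 →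
    M (f.smulRight x) w ∈ N)
include h𝒩 hM hMN

theorem exists_apply_smulRight_apply_eq_smul {K N : Submodule ℂ X} (hKN : ProperChain 𝒩 K m N)
    {f : X →L[ℂ] ℂ} (hf : f ∈ annihilatorOf N) {z : X} (hz : z ∈ properSpan 𝒩) (hfz : f z = 0) :
    ∃ c : ℂ, ∀ x ∈ K, M (f.smulRight x) z = c • x := by
  rcases eq_or_ne f 0 with rfl | hf0
  · refine ⟨0, fun x _ => ?_⟩
    rw [ContinuousLinearMap.zero_smulRight, map_zero, zero_apply, zero_smul]
  obtain ⟨u, hu, hfu⟩ := h𝒩.exists_mem_properSpan_apply_eq_one hf0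
  obtain ⟨K', hK', hNK', hzK', huK'⟩ := h𝒩.exists_properMembers_ge hKN.right_mem hz hu
  obtain ⟨N', hKN'⟩ := h𝒩.exists_properChain hK' m
  obtain ⟨k, hk, w, -, hkw, hfw⟩ :=
    h𝒩.exists_annihilatorOf_apply_eq_one_and_apply_eq_zero hKN'.right_mem (hKN'.le huK') hfu
  have hkN : k ∈ annihilatorOf N := annihilatorOf_anti (hNK'.trans hKN'.le) hk
  have hwN : w ∉ N := fun hw => by simp [hkN w hw] at hkw
  have hc := h𝒩.chainRankOnes_subset_nestAlgebra (hKN'.smulRight_mem hzK' hk)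
  refine ⟨f (-M (k.smulRight z) w), fun x hx => ?_⟩
  have hcommute : ⁅f.smulRight x, k.smulRight z⁆ = 0 := by
    rw [lie_smulRight_smulRight, hfz, hkN x (hKN.le hx), zero_smul, zero_smul, sub_zero]
  have hlie : ⁅M (f.smulRight x), k.smulRight z⁆ = ⁅f.smulRight x, -M (k.smulRight z)⁆ := by
    rw [lie_neg, ← add_eq_zero_iff_eq_neg, ← hM _ (hKN.smulRight_mem hx hf) _ hc, hcommute,
      map_zero]
  rw [apply_eq_of_lie_smulRight_eq hlie hkw hfw, hkN _ (hMN K N hKN x hx f hf w hwN hfw),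
    zero_smul, zero_add, neg_apply]

theorem leibnizDefect_smulRight_apply_eq_zero {A : X →L[ℂ] X} (hA : A ∈ nestAlgebra 𝒩)
    {K N : Submodule ℂ X} (hKN : ProperChain 𝒩 K m N) {x : X} (hx : x ∈ K) {f : X →L[ℂ] ℂ}
    (hf : f ∈ annihilatorOf N) {z : X} (hz : z ∈ properSpan 𝒩) (hfz : f z = 0) :
    leibnizDefect M A (f.smulRight x) z = 0 := by
  obtain ⟨c, hc⟩ := exists_apply_smulRight_apply_eq_smul h𝒩 hM hMN hKN hf hz hfz
  simp [leibnizDefect_apply, mul_smulRight, hc _ hx, hc _ (hA K hKN.left_mem.1 x hx), hfz]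

theorem leibnizDefect_smulRight_apply_mem_span {A : X →L[ℂ] X} (hA : A ∈ nestAlgebra 𝒩)
    {K N : Submodule ℂ X} (hKN : ProperChain 𝒩 K m N) {x : X} (hx : x ∈ K) {f : X →L[ℂ] ℂ}
    (hf : f ∈ annihilatorOf N) {u : X} (hu : u ∈ properSpan 𝒩) (hfu : f u = 1) :
    leibnizDefect M A (f.smulRight x) u ∈ ℂ ∙ x := by
  set g : X →L[ℂ] ℂ := f.comp A - f (A u) • f
  have hg : g ∈ annihilatorOf N := fun v hv => by
    simp [g, hf v hv, hf _ (hA N hKN.right_mem.1 v hv)]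
  have hgu : g u = 0 := by simp [g, hfu]
  have hv : A u - f (A u) • u ∈ properSpan 𝒩 :=
    sub_mem (h𝒩.apply_mem_properSpan hA hu) (Submodule.smul_mem _ _ hu)
  have hfv : f (A u - f (A u) • u) = 0 := by simp [hfu]
  obtain ⟨r, hr⟩ := exists_apply_smulRight_apply_eq_smul h𝒩 hM hMN hKN hg hu hgu
  obtain ⟨s, hs⟩ := exists_apply_smulRight_apply_eq_smul h𝒩 hM hMN hKN hf hv hfv
  -- The Lie rule moves `A` to the right of the rank-one operator, where it acts on the functional.
  have hright : leibnizDefect M A (f.smulRight x) =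
      M (f.smulRight x * A) - M (f.smulRight x) * A - f.smulRight x * M A := by
    have hlie := hM _ (hKN.smulRight_mem hx hf) A hA
    simp only [Ring.lie_def, map_sub] at hlie
    rw [leibnizDefect_apply]
    linear_combination (norm := module) -hlie
  have hcomp : f.smulRight x * A = g.smulRight x + f (A u) • f.smulRight x := by
    ext v
    simp [g, sub_smul, mul_smul]
  have hMv : M (f.smulRight x) (A u) = s • x + f (A u) • M (f.smulRight x) u := by
    rw [← hs x hx, map_sub, map_smul, sub_add_cancel]
  refine Submodule.mem_span_singleton.2 ⟨r - s - f (M A u), ?_⟩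
  rw [hright, hcomp]
  simp [hr x hx, hMv]
  module

theorem exists_leibnizDefect_eq_smul {A e : X →L[ℂ] X} (hA : A ∈ nestAlgebra 𝒩)
    (he : e ∈ chainRankOnes 𝒩 m) : ∃ s : ℂ, leibnizDefect M A e = s • e := by
  obtain ⟨K, N, hKN, x, hx, f, hf, rfl⟩ := he
  rcases eq_or_ne (f.smulRight x) 0 with he0 | he0
  · exact ⟨0, by rw [he0, map_zero, smul_zero]⟩
  obtain ⟨u, hu, hfu⟩ := h𝒩.exists_mem_properSpan_apply_eq_one (smulRight_ne_zero_iff.1 he0).1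
  exact exists_eq_smul_smulRight h𝒩.dense_properSpan hu hfu
    (leibnizDefect_smulRight_apply_mem_span h𝒩 hM hMN hA hKN hx hf hu hfu)
    fun z hz hfz => leibnizDefect_smulRight_apply_eq_zero h𝒩 hM hMN hA hKN hx hf hz hfz

theorem leibnizDefect_eq_smul_of_eq_smul {A : X →L[ℂ] X} (hA : A ∈ nestAlgebra 𝒩)
    {e e' : X →L[ℂ] X} (he : e ∈ chainRankOnes 𝒩 m) (he0 : e ≠ 0) (he' : e' ∈ chainRankOnes 𝒩 m)
    {s : ℂ} (hs : leibnizDefect M A e = s • e) : leibnizDefect M A e' = s • e' := by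
  rcases eq_or_ne e' 0 with rfl | he0'
  · rw [map_zero, smul_zero]
  have heigen {d : X →L[ℂ] X} (hd : d ∈ chainRankOnes 𝒩 m) :=
    exists_leibnizDefect_eq_smul h𝒩 hM hMN hA hd
  have hstep {d d' : X →L[ℂ] X} (hd0 : d ≠ 0) (hd' : d' ∈ chainRankOnes 𝒩 m) (hd0' : d' ≠ 0)
      (hdd' : d + d' ∈ chainRankOnes 𝒩 m) (hd : leibnizDefect M A d = s • d) :
      leibnizDefect M A d' = s • d' := by
    obtain ⟨r, hr⟩ := heigen hd'
    obtain ⟨q, hq⟩ := heigen hdd'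
    rwa [eigenvalue_eq_of_add hd0 hd0' hd hr hq]
  obtain ⟨c, hc, c', hc', hc0, hc0', hec, hcc', hce'⟩ :=
    h𝒩.exists_add_mem_chainRankOnes he he0 he' he0'
  exact hstep hc0' he' he0' hce' (hstep hc0 hc' hc0' hcc' (hstep he0 hc hc0 hec hs))

theorem exists_forall_leibnizDefect_eq_smul :
    ∃ σ : (X →L[ℂ] X) →ₗ[ℂ] ℂ, ∀ A ∈ nestAlgebra 𝒩, ∀ e ∈ chainRankOnes 𝒩 m,
      leibnizDefect M A e = σ A • e := by
  obtain ⟨e₀, he₀, he₀0⟩ := h𝒩.exists_ne_zero_mem_chainRankOnes m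
  obtain ⟨ℓ, hℓ⟩ := SeparatingDual.exists_eq_one (R := ℂ) he₀0
  refine ⟨ℓ.toLinearMap ∘ₗ (leibnizDefect M).flip e₀, fun A hA e he => ?_⟩
  obtain ⟨s, hs⟩ := exists_leibnizDefect_eq_smul h𝒩 hM hMN hA he₀
  have hσ : ℓ (leibnizDefect M A e₀) = s := by rw [hs, map_smul, hℓ, smul_eq_mul, mul_one]
  exact leibnizDefect_eq_smul_of_eq_smul h𝒩 hM hMN hA he₀ he₀0 he (by simpa [hσ] using hs)

end LeibnizDefect

section Decomposition

variable {X : Type*} [NormedAddCommGroup X] [NormedSpace ℂ X] {𝒩 : Set (Submodule ℂ X)} {m : ℕ}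
  {L : nestAlgebra 𝒩 →ₗ[ℂ] (X →L[ℂ] X)}

theorem IsUnboundedNest.isDerivOn_of_leibnizDefect_eq_smul (h𝒩 : IsUnboundedNest 𝒩)
    {M : (X →L[ℂ] X) →ₗ[ℂ] (X →L[ℂ] X)} {σ : (X →L[ℂ] X) → ℂ}
    (hσ : ∀ A ∈ nestAlgebra 𝒩, ∀ e ∈ chainRankOnes 𝒩 m, leibnizDefect M A e = σ A • e)
    {D : nestAlgebra 𝒩 →ₗ[ℂ] (X →L[ℂ] X)} (hD : ∀ A : nestAlgebra 𝒩, D A = M A + σ A • 1) :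
    IsDerivOn (nestAlgebra 𝒩) D := by
  have hDe (A : nestAlgebra 𝒩) {e : X →L[ℂ] X} (he : e ∈ chainRankOnes 𝒩 m) :
      D A * e = M (A * e) - A * M e := by
    have hdefect := hσ A A.2 e he
    rw [leibnizDefect_apply, sub_eq_iff_eq_add'] at hdefect
    rw [hdefect, hD, add_mul, smul_one_mul]
  intro A B
  refine h𝒩.ext_chainRankOnes (m := m) fun e he => ?_
  rw [hDe (A * B) he, add_mul, mul_assoc, mul_assoc, hDe A (mul_mem_chainRankOnes B.2 he),
    hDe B he, Subalgebra.coe_mul]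
  noncomm_ring

namespace IsLieNDeriv

theorem exists_hasLieDeriv (h𝒩 : IsUnboundedNest 𝒩) (hL : IsLieNDeriv (nestAlgebra 𝒩) (m + 2) L)
    {L' : (X →L[ℂ] X) →ₗ[ℂ] (X →L[ℂ] X)} (hL' : ∀ A : nestAlgebra 𝒩, L' A = L A)
    {e : X →L[ℂ] X} (he : e ∈ chainRankOnes 𝒩 m) : ∃ E, HasLieDeriv (nestAlgebra 𝒩) L' e E := by
  obtain ⟨a, rfl⟩ := h𝒩.exists_commPoly_eq he
  exact ⟨_, coe_commPoly (m + 1) a ▸ hL.hasLieDeriv_commPoly hL' a⟩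

theorem apply_smulRight_apply_mem (h𝒩 : IsNest 𝒩) (hL : IsLieNDeriv (nestAlgebra 𝒩) (m + 2) L)
    {K N : Submodule ℂ X} (hKN : ProperChain 𝒩 K (m + 1) N) {x : X} (hx : x ∈ K)
    {f : X →L[ℂ] ℂ} (hf : f ∈ annihilatorOf N) {w : X} (hw : w ∉ N) (hfw : f w = 0)
    {e : nestAlgebra 𝒩} (he : (e : X →L[ℂ] X) = f.smulRight x) : L e w ∈ N := by
  obtain ⟨a, ha, haN, haw, hcomm⟩ := h𝒩.exists_commPoly_eq_smulRight hKN hx hf hw hfw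
  lift a to Fin (m + 2) → nestAlgebra 𝒩 using ha
  obtain rfl : e = commPoly (m + 2) a := by
    rw [Subtype.ext_iff, he, coe_commPoly, hcomm]
  rw [hL a]
  exact commPolyVariation_apply_mem m haN haw _

theorem exists_isDerivOn_eq_add (h𝒩 : IsUnboundedNest 𝒩)
    (hL : IsLieNDeriv (nestAlgebra 𝒩) (m + 2) L) :
    ∃ (D : nestAlgebra 𝒩 →ₗ[ℂ] (X →L[ℂ] X)) (t : ℂ) (τ : nestAlgebra 𝒩 →ₗ[ℂ] ℂ),
      IsDerivOn (nestAlgebra 𝒩) D ∧ ∀ A, D A = L A + t • (A : X →L[ℂ] X) + τ A • 1 := by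
  -- A linear extension of `L` to `B(X)` spares membership proofs for brackets and products.
  obtain ⟨L', hL'⟩ := LinearMap.exists_extend (p := Subalgebra.toSubmodule (nestAlgebra 𝒩)) L
  replace hL' : ∀ A : nestAlgebra 𝒩, L' A = L A := fun A => congr($hL' A)
  obtain ⟨t, ht⟩ := exists_forall_hasLieDeriv_add_smul h𝒩 (m := m + 1) fun e he =>
    hL.exists_hasLieDeriv h𝒩 hL' (chainRankOnes_succ_subset he)
  let M : (X →L[ℂ] X) →ₗ[ℂ] (X →L[ℂ] X) := L' + t • .id
  have hlocal : ∀ K N, ProperChain 𝒩 K (m + 1) N → ∀ x ∈ K, ∀ f ∈ annihilatorOf N, ∀ w ∉ N,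
      f w = 0 → M (f.smulRight x) w ∈ N := by
    intro K N hKN x hx f hf w hw hfw
    lift f.smulRight x to nestAlgebra 𝒩 using
      h𝒩.chainRankOnes_subset_nestAlgebra (hKN.smulRight_mem hx hf) with e he
    have hew : (e : X →L[ℂ] X) w = 0 := by simp [he, hfw]
    simpa [M, hew, hL'] using hL.apply_smulRight_apply_mem h𝒩.toIsNest hKN hx hf hw hfw he
  obtain ⟨σ, hσ⟩ := exists_forall_leibnizDefect_eq_smul (M := M) h𝒩
    (fun e he => (ht e he).add_smul_id) hlocal
  let ι := (nestAlgebra 𝒩).val.toLinearMap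
  exact ⟨L + t • ι + (σ ∘ₗ ι).smulRight 1, t, σ ∘ₗ ι,
    h𝒩.isDerivOn_of_leibnizDefect_eq_smul hσ fun A => by simp [M, hL', ι], fun A => rfl⟩

theorem exists_isDerivOn_eq_add_smul_one (h𝒩 : IsUnboundedNest 𝒩)
    (hL : IsLieNDeriv (nestAlgebra 𝒩) (m + 2) L) :
    ∃ (D : nestAlgebra 𝒩 →ₗ[ℂ] (X →L[ℂ] X)) (τ : nestAlgebra 𝒩 →ₗ[ℂ] ℂ),
      IsDerivOn (nestAlgebra 𝒩) D ∧ (∀ A, D A = L A + τ A • 1) ∧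
        ∀ a : Fin (m + 2) → nestAlgebra 𝒩, τ (commPoly (m + 2) a) = 0 := by
  obtain ⟨D, t, τ, hD, hDL⟩ := hL.exists_isDerivOn_eq_add h𝒩
  have hcomm := hL.smul_commPoly_eq hD (t := t) (τ := τ) hDL
  obtain ⟨e, he, he0⟩ := h𝒩.exists_ne_zero_mem_chainRankOnes (m + 1)
  have hone : (1 : X →L[ℂ] X) ≠ 0 := fun h => he0 (by rw [← mul_one e, h, mul_zero])
  have ht : t = 0 := by
    obtain ⟨a, ha⟩ := h𝒩.exists_commPoly_eq he
    have hscalar := hcomm a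
    set s := τ (commPoly (m + 2) a)
    rw [ha] at hscalar
    -- Multiplying `((m + 1) t) • e = s • 1` by `e` gives `0 = s • e`, because `e * e = 0`.
    have hs : s = 0 := by
      have hmul := congr($hscalar * e)
      rw [smul_mul_assoc, mul_self_eq_zero_of_mem_chainRankOnes he, smul_zero,
        smul_one_mul] at hmul
      exact (smul_eq_zero_iff_left he0).1 hmul.symm
    rw [hs, zero_smul, smul_eq_zero_iff_left he0] at hscalar
    exact (mul_eq_zero.1 hscalar).resolve_left (Nat.cast_add_one_ne_zero m)
  refine ⟨D, τ, hD, fun A => by simp [hDL, ht], fun a => ?_⟩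
  have hτ := hcomm a
  rw [ht, mul_zero, zero_smul, eq_comm] at hτ
  exact (smul_eq_zero_iff_left hone).1 hτ

end IsLieNDeriv

theorem IsDerivOn.continuous_scalar_of_eq_add_smul_one {B : Type*} [NormedRing B]
    [NormedAlgebra ℂ B] {𝒜 : Subalgebra ℂ B} {D L : 𝒜 →ₗ[ℂ] B} {τ : 𝒜 →ₗ[ℂ] ℂ} (hD : IsDerivOn 𝒜 D)
    (hDL : ∀ A, D A = L A + τ A • 1) {e : 𝒜} (he : e ≠ 0) (hτ : ∀ A, τ (A * e) = 0)
    (hL : Continuous L) : Continuous τ := by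
  have hτe : τ e = 0 := one_mul e ▸ hτ 1
  have hsmul : (fun A => τ A • (e : B)) = fun A => L (A * e) - L A * e - A * L e := by
    ext A
    have h := hD A e
    rw [hDL, hDL, hDL, hτ, hτe, zero_smul, add_zero, add_zero, add_mul,
      smul_one_mul] at h
    rw [h]
    abel
  have hcont : Continuous fun A => τ A • (e : B) := by
    rw [hsmul]
    fun_prop
  exact (isClosedEmbedding_smul_left (𝕜 := ℂ) (by simpa using he)).continuous_iff.2 hcont

end Decomposition

theorem statement19_general {X : Type*} [NormedAddCommGroup X] [NormedSpace ℂ X]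
    {𝒩 : Set (Submodule ℂ X)} (h𝒩 : IsNest 𝒩) (hann : annihilatorOf (nestXminus 𝒩) = ⊥)
    {n : ℕ} (hn : 2 ≤ n) {L : nestAlgebra 𝒩 →ₗ[ℂ] (X →L[ℂ] X)}
    (hL : IsLieNDeriv (nestAlgebra 𝒩) n L) :
    ∃ D H : nestAlgebra 𝒩 →ₗ[ℂ] (X →L[ℂ] X),
      IsDerivOn (nestAlgebra 𝒩) D ∧ (∀ A, ∃ c : ℂ, H A = c • 1) ∧
        (∀ a : Fin n → nestAlgebra 𝒩, H (commPoly n a) = 0) ∧ L = D + H ∧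
        (Continuous L → Continuous D ∧ Continuous H) := by
  rcases subsingleton_or_nontrivial X with hX | hX
  · exact ⟨L, 0, fun _ _ => Subsingleton.elim _ _, fun _ => ⟨0, by simp⟩, fun _ => rfl,
      (add_zero L).symm, fun hcont => ⟨hcont, continuous_zero⟩⟩
  obtain ⟨m, rfl⟩ := Nat.exists_eq_add_of_le' hn
  have hunbounded := h𝒩.isUnboundedNest hann
  obtain ⟨D, τ, hD, hDL, hτ⟩ := hL.exists_isDerivOn_eq_add_smul_one hunbounded
  refine ⟨D, -τ.smulRight 1, hD, fun A => ⟨-τ A, by simp⟩, fun a => by simp [hτ], ?_, ?_⟩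
  · ext1 A
    simp [hDL]
  intro hcont
  obtain ⟨e, he, he0⟩ := hunbounded.exists_ne_zero_mem_chainRankOnes (m + 1)
  lift e to nestAlgebra 𝒩 using h𝒩.chainRankOnes_subset_nestAlgebra he
  have hτcont : Continuous τ := by
    refine hD.continuous_scalar_of_eq_add_smul_one hDL (by simpa using he0) (fun A => ?_) hcont
    obtain ⟨a, ha⟩ := hunbounded.exists_commPoly_eq (mul_mem_chainRankOnes A.2 he)
    rw [← hτ a]
    exact congrArg τ (Subtype.ext ha.symm)
  have hH : Continuous fun A => τ A • (1 : X →L[ℂ] X) := hτcont.smul continuous_const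
  exact ⟨(hcont.add hH).congr fun A => (hDL A).symm, hH.neg⟩

/-- (Theorem 3.22 of the paper.)  Let `X` be a complex Banach space
and `𝒩` a non-trivial nest on `X` with `X₋^⊥ = {0}` (i.e. `dim X₋^⊥ = 0`).  Then every
Lie `n`-derivation `L : Alg 𝒩 → B(X)` (`n ≥ 2`) decomposes as `L = D + H` with `D` a
derivation and `H` a linear map into `ℂ I` vanishing on all `(n-1)`-th commutators;
moreover, if `L` is continuous then `D, H` can be chosen continuous. -/
theorem statement19 {X : Type*} [NormedAddCommGroup X] [NormedSpace ℂ X] [CompleteSpace X]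
    (𝒩 : Set (Submodule ℂ X)) (hnest : IsNest 𝒩)
    (hnontrivial : 𝒩 ≠ ({⊥, ⊤} : Set (Submodule ℂ X)))
    (hann : annihilatorOf (nestXminus 𝒩) = ⊥)
    (n : ℕ) (hn : 2 ≤ n)
    (L : ↥(nestAlgebra 𝒩) →ₗ[ℂ] (X →L[ℂ] X))
    (hL : IsLieNDeriv (nestAlgebra 𝒩) n L) :
    (∃ D H : ↥(nestAlgebra 𝒩) →ₗ[ℂ] (X →L[ℂ] X),
        IsDerivOn (nestAlgebra 𝒩) D ∧
        (∀ a : ↥(nestAlgebra 𝒩), ∃ c : ℂ, H a = c • (1 : X →L[ℂ] X)) ∧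
        (∀ a : Fin n → ↥(nestAlgebra 𝒩), H (commPoly n a) = 0) ∧
        L = D + H) ∧
    (Continuous L →
      ∃ D H : ↥(nestAlgebra 𝒩) →ₗ[ℂ] (X →L[ℂ] X),
        IsDerivOn (nestAlgebra 𝒩) D ∧
        (∀ a : ↥(nestAlgebra 𝒩), ∃ c : ℂ, H a = c • (1 : X →L[ℂ] X)) ∧
        (∀ a : Fin n → ↥(nestAlgebra 𝒩), H (commPoly n a) = 0) ∧
        L = D + H ∧ Continuous D ∧ Continuous H) := by
  obtain ⟨D, H, hD, hH, hcomm, hadd, hcont⟩ := statement19_general hnest hann hn hL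
  exact ⟨⟨D, H, hD, hH, hcomm, hadd⟩, fun hLcont => ⟨D, H, hD, hH, hcomm, hadd, hcont hLcont⟩⟩
end
end
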